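/- Let (M,ḡ,ū) be a static vacuum triple with ū > 0, i.e., Ric_{ḡ} = ū^{-1}∇²ū and Δū = 0. Then in static-harmonic coordinates (coordinates x_k with Δx_k + ū^{-1}∇ū·∇x_k = 0), the static vacuum system becomes a quasilinear elliptic system whose second-order part is (1/2)ḡ^{rs}∂²ḡ_{ij}/∂x_r∂x_s in the metric equation, and consequently ḡ and ū are real-analytic in such coordinates on the interior of M. -/

import Mathlib

noncomputable section

open scoped BigOperators
open MeasureTheory Filter

/-- Points of the coordinate chart `ℝⁿ`. -/
abbrev Pt (n : ℕ) := Fin n → ℝ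

/-- Partial derivative of a scalar function in the `i`-th coordinate direction. -/
def pd {n : ℕ} (i : Fin n) (f : Pt n → ℝ) (x : Pt n) : ℝ :=
  fderiv ℝ f x (Pi.single i 1)

/-- Inverse metric `g^{ij}` (pointwise matrix inverse). -/
def ginv {n : ℕ} (g : Pt n → Fin n → Fin n → ℝ) (x : Pt n) (i j : Fin n) : ℝ :=
  (Matrix.of (g x))⁻¹ i j

/-- Christoffel symbols `Γ^k_{ij}` of the metric `g`. -/
def chr {n : ℕ} (g : Pt n → Fin n → Fin n → ℝ) (x : Pt n) (k i j : Fin n) : ℝ :=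
  (1/2) * ∑ l, ginv g x k l *
    (pd i (fun y => g y j l) x + pd j (fun y => g y i l) x - pd l (fun y => g y i j) x)

/-- Covariant derivative of a covector field: `X_{i;j}`. -/
def cdCov {n : ℕ} (g : Pt n → Fin n → Fin n → ℝ) (X : Pt n → Fin n → ℝ)
    (x : Pt n) (i j : Fin n) : ℝ :=
  pd j (fun y => X y i) x - ∑ k, chr g x k i j * X x k

/-- Covariant derivative of a vector field: `X^i_{;j}`. -/
def cdVec {n : ℕ} (g : Pt n → Fin n → Fin n → ℝ) (X : Pt n → Fin n → ℝ)
    (x : Pt n) (i j : Fin n) : ℝ :=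
  pd j (fun y => X y i) x + ∑ k, chr g x i k j * X x k

/-- Covariant derivative of a symmetric (0,2)-tensor: `h_{ij;k}`. -/
def cd2 {n : ℕ} (g : Pt n → Fin n → Fin n → ℝ) (h : Pt n → Fin n → Fin n → ℝ)
    (x : Pt n) (i j k : Fin n) : ℝ :=
  pd k (fun y => h y i j) x - ∑ l, chr g x l i k * h x l j - ∑ l, chr g x l j k * h x i l

/-- Second covariant derivative of a covector field: `X_{i;jk}`. -/
def cdCov2 {n : ℕ} (g : Pt n → Fin n → Fin n → ℝ) (X : Pt n → Fin n → ℝ)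
    (x : Pt n) (i j k : Fin n) : ℝ :=
  cd2 g (fun y a b => cdCov g X y a b) x i j k

/-- Riemann curvature tensor `R^l_{ijk}`. -/
def riem {n : ℕ} (g : Pt n → Fin n → Fin n → ℝ) (x : Pt n) (l i j k : Fin n) : ℝ :=
  pd j (fun y => chr g y l i k) x - pd k (fun y => chr g y l i j) x
  + ∑ m, chr g x l m j * chr g x m i k - ∑ m, chr g x l m k * chr g x m i j

/-- Riemann curvature with all indices lowered. -/
def riemLow {n : ℕ} (g : Pt n → Fin n → Fin n → ℝ) (x : Pt n) (a b c d : Fin n) : ℝ :=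
  ∑ l, g x a l * riem g x l b c d

/-- Ricci curvature `R_{ij}`. -/
def ric {n : ℕ} (g : Pt n → Fin n → Fin n → ℝ) (x : Pt n) (i j : Fin n) : ℝ :=
  ∑ l, riem g x l i l j

/-- Lower the index of a vector field using `g`. -/
def lowerV {n : ℕ} (g : Pt n → Fin n → Fin n → ℝ) (X : Pt n → Fin n → ℝ)
    (x : Pt n) (i : Fin n) : ℝ :=
  ∑ j, g x i j * X x j

/-- Lie derivative of the metric `g` along the vector field `X`:
`(L_X g)_{ij} = X_{i;j} + X_{j;i}` (index lowered by `g`). -/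
def lieg {n : ℕ} (g : Pt n → Fin n → Fin n → ℝ) (X : Pt n → Fin n → ℝ)
    (x : Pt n) (i j : Fin n) : ℝ :=
  cdCov g (lowerV g X) x i j + cdCov g (lowerV g X) x j i

/-- Hessian `f_{;ij}`. -/
def hess {n : ℕ} (g : Pt n → Fin n → Fin n → ℝ) (f : Pt n → ℝ)
    (x : Pt n) (i j : Fin n) : ℝ :=
  cdCov g (fun y a => pd a f y) x i j

/-- Laplace–Beltrami operator on functions. -/
def lapf {n : ℕ} (g : Pt n → Fin n → Fin n → ℝ) (f : Pt n → ℝ) (x : Pt n) : ℝ :=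
  ∑ i, ∑ j, ginv g x i j * hess g f x i j

/-- Trace of a (0,2)-tensor with respect to `g`. -/
def trT {n : ℕ} (g : Pt n → Fin n → Fin n → ℝ) (h : Pt n → Fin n → Fin n → ℝ)
    (x : Pt n) : ℝ :=
  ∑ i, ∑ j, ginv g x i j * h x i j

/-- Divergence of a (0,2)-tensor, as a covector. -/
def divT {n : ℕ} (g : Pt n → Fin n → Fin n → ℝ) (h : Pt n → Fin n → Fin n → ℝ)
    (x : Pt n) (i : Fin n) : ℝ :=
  ∑ j, ∑ k, ginv g x j k * cd2 g h x i j k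

/-- Bianchi operator `β_g h = -div_g h + (1/2) d (tr_g h)`. -/
def bianchi {n : ℕ} (g : Pt n → Fin n → Fin n → ℝ) (h : Pt n → Fin n → Fin n → ℝ)
    (x : Pt n) (i : Fin n) : ℝ :=
  -divT g h x i + (1/2) * pd i (fun y => trT g h y) x

/-- Gradient vector field `(∇f)^i`. -/
def gradV {n : ℕ} (g : Pt n → Fin n → Fin n → ℝ) (f : Pt n → ℝ)
    (x : Pt n) (i : Fin n) : ℝ :=
  ∑ j, ginv g x i j * pd j f x

/-- The tensor is symmetric. -/
def symT {n : ℕ} (g : Pt n → Fin n → Fin n → ℝ) : Prop :=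
  ∀ x i j, g x i j = g x j i

/-- `g` is pointwise positive definite. -/
def posdef {n : ℕ} (g : Pt n → Fin n → Fin n → ℝ) : Prop :=
  ∀ (x : Pt n) (v : Fin n → ℝ), v ≠ 0 → 0 < ∑ i, ∑ j, g x i j * v i * v j

/-- Smooth componentwise. -/
def smoothT {n : ℕ} (g : Pt n → Fin n → Fin n → ℝ) : Prop :=
  ∀ i j, ContDiff ℝ (⊤ : ℕ∞) (fun x => g x i j)

/-- The lowered tensor `(T_h)_{ijk} = (1/2)(h_{ij;k} + h_{ik;j} - h_{jk;i})`. -/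
def Tlow {n : ℕ} (g : Pt n → Fin n → Fin n → ℝ) (h : Pt n → Fin n → Fin n → ℝ)
    (x : Pt n) (i j k : Fin n) : ℝ :=
  (1/2) * (cd2 g h x i j k + cd2 g h x i k j - cd2 g h x j k i)

/-- Second partial derivatives. -/
def pd2 {n : ℕ} (i j : Fin n) (f : Pt n → ℝ) (x : Pt n) : ℝ :=
  pd i (fun y => pd j f y) x

/-!
The contracted Christoffel symbols `Γ_c = g^{lm} Γ_{c,lm}` carry all second derivatives of the
metric in the Ricci tensor other than `-(1/2) g^{rs} ∂_r ∂_s g_{ij}`. In static-harmonic coordinates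
`Γ_c = u⁻¹ ∂_c u`, so they contribute `u⁻¹ ∂_i ∂_j u` up to lower order, which the Hessian of `u`
cancels. Consequently `g_{ij}`, `g^{ij}`, `u` and `1/u` together solve a quasilinear system with the
scalar principal part `g^{rs} ∂_r ∂_s` and right hand sides polynomial in the 1-jets.

Smooth solutions of such a system are analytic because their `k`-th derivatives grow like
`ρ^k k! / (k+1)²` on balls shrinking with `k`. Each differentiated equation is a linear equation for
`∂^J w`, and the interior gradient estimate on a ball of radius comparable to `1/k` bounds the
derivatives of order `k + 1` in terms of themselves with a factor smaller than one; iterating this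
estimate improves the bound to the desired one. The gradient estimate follows from the maximum
principle by doubling the variables, which needs no more than Lipschitz continuous coefficients.
-/

section
open scoped ContDiff Matrix

variable {n : ℕ} {f g : Pt n → ℝ}

/-! ### Partial derivatives -/

theorem contDiff_pd (hf : ContDiff ℝ ∞ f) (i : Fin n) : ContDiff ℝ ∞ (pd i f) :=
  (hf.fderiv_right (m := ∞) (by simp)).clm_apply contDiff_const

theorem fderiv_eq_dotProduct_pd (f : Pt n → ℝ) (x v : Pt n) :
    fderiv ℝ f x v = v ⬝ᵥ fun r => pd r f x := by
  conv_lhs => rw [pi_eq_sum_univ' v]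
  simp [dotProduct, pd]

theorem hasDerivAt_line (hf : Differentiable ℝ f) (x v : Pt n) (s : ℝ) :
    HasDerivAt (fun s : ℝ => f (x + s • v)) (v ⬝ᵥ fun r => pd r f (x + s • v)) s := by
  have hline : HasDerivAt (fun s : ℝ => x + s • v) v s := by
    simpa using ((hasDerivAt_id s).smul_const v).const_add x
  rw [← fderiv_eq_dotProduct_pd]
  exact (hf (x + s • v)).hasFDerivAt.comp_hasDerivAt s hline

theorem pd_comm (hf : ContDiff ℝ ∞ f) (i j : Fin n) : pd i (pd j f) = pd j (pd i f) := by
  have hdiff : Differentiable ℝ (fderiv ℝ f) :=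
    (hf.fderiv_right (m := ∞) (by simp)).differentiable (by simp)
  have hpd : ∀ (i j : Fin n) x,
      pd i (pd j f) x = fderiv ℝ (fderiv ℝ f) x (Pi.single i 1) (Pi.single j 1) := by
    intro i j x
    change fderiv ℝ (fun y => fderiv ℝ f y (Pi.single j 1)) x (Pi.single i 1) = _
    rw [fderiv_clm_apply (hdiff x) (differentiableAt_const _)]
    simp
  funext x
  have hsymm : IsSymmSndFDerivAt ℝ f x := hf.contDiffAt.isSymmSndFDerivAt (by simp; norm_cast)
  rw [hpd i j x, hpd j i x]
  exact hsymm _ _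

theorem pd_const (c : ℝ) (i : Fin n) : pd i (fun _ : Pt n => c) = 0 := by
  funext x
  simp [pd]

theorem pd_add (hf : Differentiable ℝ f) (hg : Differentiable ℝ g) (i : Fin n) :
    pd i (f + g) = pd i f + pd i g := by
  funext x
  simp [pd, fderiv_add (hf x) (hg x)]

theorem pd_mul (hf : Differentiable ℝ f) (hg : Differentiable ℝ g) (i : Fin n) :
    pd i (f * g) = pd i f * g + f * pd i g := by
  funext x
  simp only [pd, fderiv_mul (hf x) (hg x), Pi.add_apply, Pi.mul_apply, add_apply,
    smul_apply, smul_eq_mul]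
  ring

theorem pd_sub (hf : Differentiable ℝ f) (hg : Differentiable ℝ g) (i : Fin n) :
    pd i (f - g) = pd i f - pd i g := by
  funext x
  simp [pd, fderiv_sub (hf x) (hg x)]

theorem pd_smul (hf : Differentiable ℝ f) (c : ℝ) (i : Fin n) : pd i (c • f) = c • pd i f := by
  funext x
  simp [pd, fderiv_const_smul (hf x)]

theorem pd_inv (hf : Differentiable ℝ f) (hf₀ : ∀ x, f x ≠ 0) (i : Fin n) :
    pd i f⁻¹ = -(f⁻¹ * f⁻¹ * pd i f) := by
  funext x
  have hinv := (hasDerivAt_inv (hf₀ x)).comp_hasFDerivAt x (hf x).hasFDerivAt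
  change fderiv ℝ (fun y => (f y)⁻¹) x (Pi.single i 1) = _
  rw [show (fun y => (f y)⁻¹) = Inv.inv ∘ f from rfl, hinv.fderiv]
  simp [pd, sq]

theorem pd_sum {ι : Type*} (s : Finset ι) {F : ι → Pt n → ℝ}
    (hF : ∀ a ∈ s, Differentiable ℝ (F a)) (i : Fin n) :
    pd i (∑ a ∈ s, F a) = ∑ a ∈ s, pd i (F a) := by
  funext x
  simp [pd, fderiv_sum fun a ha => hF a ha x]

end

section
open scoped Matrix MatrixOrder

variable {ι : Type*} [Fintype ι]

/-! ### Traces and the Loewner order -/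

theorem le_of_isSymm_of_dotProduct_mulVec_le {X Y : Matrix ι ι ℝ} (hX : X.IsSymm) (hY : Y.IsSymm)
    (h : ∀ ζ : ι → ℝ, ζ ⬝ᵥ X *ᵥ ζ ≤ ζ ⬝ᵥ Y *ᵥ ζ) : X ≤ Y := by
  refine Matrix.PosSemidef.of_dotProduct_mulVec_nonneg ?_ fun ζ => ?_
  · rw [Matrix.IsHermitian, Matrix.conjTranspose_eq_transpose_of_trivial]
    exact hY.sub hX
  · simpa [Matrix.sub_mulVec] using h ζ

theorem trace_mul_nonneg {S T : Matrix ι ι ℝ} (hS : 0 ≤ S) (hT : 0 ≤ T) :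
    0 ≤ (S * T).trace := by
  classical
  obtain ⟨B, rfl⟩ := CStarAlgebra.nonneg_iff_eq_star_mul_self.mp hS
  rw [Matrix.mul_assoc, Matrix.trace_mul_comm, Matrix.mul_assoc, ← Matrix.mul_assoc]
  exact ((Matrix.nonneg_iff_posSemidef.1 hT).mul_mul_conjTranspose_same B).trace_nonneg

theorem trace_mul_le_of_le_smul_one [DecidableEq ι] {S T : Matrix ι ι ℝ} {c : ℝ} (hS : 0 ≤ S)
    (hT : T ≤ c • 1) : (S * T).trace ≤ c * S.trace := by
  have h := trace_mul_nonneg hS (sub_nonneg.2 hT)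
  rw [mul_sub, Matrix.trace_sub, Matrix.mul_smul, mul_one, Matrix.trace_smul, smul_eq_mul] at h
  linarith

theorem vecMulVec_self_le_one [DecidableEq ι] {e : ι → ℝ} (he : e ⬝ᵥ e = 1) :
    Matrix.vecMulVec e e ≤ 1 := by
  refine le_of_isSymm_of_dotProduct_mulVec_le (Matrix.transpose_vecMulVec e e)
    Matrix.isSymm_one fun ζ => ?_
  have h := Finset.sum_mul_sq_le_sq_mul_sq Finset.univ e ζ
  have he' : ∑ i, e i ^ 2 = 1 := by simpa [dotProduct, sq] using he
  rw [he', one_mul] at h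
  calc ζ ⬝ᵥ Matrix.vecMulVec e e *ᵥ ζ = (e ⬝ᵥ ζ) ^ 2 := by
        simp [Matrix.vecMulVec_mulVec, dotProduct_comm ζ e, sq]
    _ ≤ ∑ i, ζ i ^ 2 := h
    _ = ζ ⬝ᵥ 1 *ᵥ ζ := by simp [dotProduct, sq]

theorem sub_smul_one_sub_vecMulVec_nonneg [DecidableEq ι] {P : Matrix ι ι ℝ} {e : ι → ℝ}
    {lam κ : ℝ} (he : e ⬝ᵥ e = 1) (hlam : 0 ≤ lam) (hκlam : κ ≤ lam / 2) (hP : lam • 1 ≤ P) :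
    0 ≤ P - κ • 1 - (lam / 2) • Matrix.vecMulVec e e := by
  rw [sub_sub, sub_nonneg]
  calc κ • (1 : Matrix ι ι ℝ) + (lam / 2) • Matrix.vecMulVec e e
      ≤ (lam / 2) • 1 + (lam / 2) • 1 :=
        add_le_add (smul_le_smul_of_nonneg_right hκlam zero_le_one)
          (smul_le_smul_of_nonneg_left (vecMulVec_self_le_one he) (by positivity))
    _ = lam • 1 := by rw [← add_smul, add_halves]
    _ ≤ P := hP

theorem trace_mul_sub_trace_mul_le [DecidableEq ι] {P Q X Y : Matrix ι ι ℝ} {e : ι → ℝ}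
    {lam κ Θ b c s : ℝ} (he : e ⬝ᵥ e = 1) (hlam : 0 ≤ lam) (hκ : 0 ≤ κ) (hκlam : κ ≤ lam / 2)
    (hb : 0 ≤ b) (hc : 0 ≤ c) (hP : lam • 1 ≤ P) (htrP : P.trace ≤ Θ) (hPQ : P ≤ Q + κ • 1)
    (hQP : Q ≤ P + κ • 1) (hXY : X - Y ≤ b • 1) (hs : e ⬝ᵥ (X - Y) *ᵥ e ≤ -s)
    (hX : X ≤ c • 1) (hY : -Y ≤ c • 1) :
    (P * X).trace - (Q * Y).trace ≤
      b * (Θ - lam / 2) - lam / 2 * s + 3 * Fintype.card ι * κ * c := by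
  have hPe := sub_smul_one_sub_vecMulVec_nonneg he hlam hκlam hP
  have hsplit : (P * X).trace - (Q * Y).trace =
      ((P - κ • 1 - (lam / 2) • Matrix.vecMulVec e e) * (X - Y)).trace
        + lam / 2 * (e ⬝ᵥ (X - Y) *ᵥ e) + (κ • 1 * X).trace + ((Q - P + κ • 1) * -Y).trace := by
    have : e ⬝ᵥ (X - Y) *ᵥ e = (Matrix.vecMulVec e e * (X - Y)).trace := by
      rw [Matrix.trace_mul_comm, Matrix.mul_vecMulVec, Matrix.trace_vecMulVec, dotProduct_comm]
    rw [this]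
    simp only [sub_mul, mul_sub, add_mul, mul_neg, smul_mul_assoc, one_mul, Matrix.trace_sub,
      Matrix.trace_add, Matrix.trace_neg, Matrix.trace_smul, smul_eq_mul]
    ring
  have hQPκ : 0 ≤ Q - P + κ • 1 := by
    rw [sub_add_eq_add_sub]
    exact sub_nonneg.2 hPQ
  have h1 := trace_mul_le_of_le_smul_one hPe hXY
  have h2 := mul_le_mul_of_nonneg_left hs (by positivity : 0 ≤ lam / 2)
  have h3 := trace_mul_le_of_le_smul_one (smul_nonneg hκ (zero_le_one (α := Matrix ι ι ℝ))) hX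
  have h4 := trace_mul_le_of_le_smul_one hQPκ hY
  have htrQP : 0 ≤ (P + κ • 1 - Q).trace :=
    (Matrix.nonneg_iff_posSemidef.1 (sub_nonneg.2 hQP)).trace_nonneg
  simp only [Matrix.trace_sub, Matrix.trace_add, Matrix.trace_smul, Matrix.trace_one,
    Matrix.trace_vecMulVec, he, smul_eq_mul, mul_one] at h1 h3 h4 htrQP
  have h1' : b * (P.trace - κ * Fintype.card ι - lam / 2) ≤ b * (Θ - lam / 2) :=
    mul_le_mul_of_nonneg_left (by linarith [mul_nonneg hκ (Nat.cast_nonneg (Fintype.card ι))]) hb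
  have h4' := mul_nonneg hc htrQP
  linarith

end

section
open scoped ContDiff Matrix MatrixOrder

variable {n : ℕ}

/-! ### The Euclidean norm on a chart -/

/-- The Euclidean norm of a coordinate vector. `Pt n` itself carries the sup norm, which is not
smooth enough for the maximum principle arguments below. -/
def euclNorm (v : Pt n) : ℝ := ‖(WithLp.toLp 2 v : EuclideanSpace ℝ (Fin n))‖

/-- The closed ball of the Euclidean norm. -/
def euclBall (x₀ : Pt n) (δ : ℝ) : Set (Pt n) := {x | euclNorm (x - x₀) ≤ δ}

theorem euclNorm_nonneg (v : Pt n) : 0 ≤ euclNorm v := norm_nonneg _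

theorem euclNorm_sq (v : Pt n) : euclNorm v ^ 2 = v ⬝ᵥ v := by
  rw [euclNorm, EuclideanSpace.norm_sq_eq]
  simp [dotProduct, sq]

theorem euclNorm_zero : euclNorm (0 : Pt n) = 0 := by simp [euclNorm]

theorem euclNorm_eq_zero {v : Pt n} : euclNorm v = 0 ↔ v = 0 := by simp [euclNorm]

theorem euclNorm_smul (c : ℝ) (v : Pt n) : euclNorm (c • v) = |c| * euclNorm v := by
  rw [euclNorm, WithLp.toLp_smul, norm_smul, Real.norm_eq_abs, euclNorm]

theorem euclNorm_sub_comm (v w : Pt n) : euclNorm (v - w) = euclNorm (w - v) := by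
  simp only [euclNorm, WithLp.toLp_sub, norm_sub_rev]

theorem euclNorm_sub_le (x y z : Pt n) :
    euclNorm (x - z) ≤ euclNorm (x - y) + euclNorm (y - z) := by
  simp only [euclNorm, WithLp.toLp_sub]
  exact norm_sub_le_norm_sub_add_norm_sub _ _ _

theorem continuous_euclNorm : Continuous (euclNorm (n := n)) := (PiLp.continuous_toLp 2 _).norm

theorem norm_le_euclNorm (v : Pt n) : ‖v‖ ≤ euclNorm v := by
  refine (pi_norm_le_iff_of_nonneg (euclNorm_nonneg v)).2 fun i => ?_
  exact PiLp.norm_apply_le (WithLp.toLp 2 v : EuclideanSpace ℝ (Fin n)) i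

theorem euclNorm_single_one (i : Fin n) : euclNorm (Pi.single i 1 : Pt n) = 1 := by
  have h := euclNorm_sq (Pi.single i 1 : Pt n)
  rw [single_one_dotProduct, Pi.single_eq_same] at h
  exact (pow_eq_one_iff_of_nonneg (euclNorm_nonneg _) two_ne_zero).1 h

theorem euclNorm_add_smul_sq (z ζ : Pt n) (s : ℝ) :
    euclNorm (z + s • ζ) ^ 2 = euclNorm z ^ 2 + 2 * s * (z ⬝ᵥ ζ) + s ^ 2 * (ζ ⬝ᵥ ζ) := by
  simp only [euclNorm_sq, add_dotProduct, dotProduct_add, smul_dotProduct, dotProduct_smul,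
    smul_eq_mul, dotProduct_comm ζ z]
  ring

theorem euclNorm_sub_le_of_mem_euclBall {x₀ x y : Pt n} {δ : ℝ} (hx : x ∈ euclBall x₀ δ)
    (hy : y ∈ euclBall x₀ δ) : euclNorm (x - y) ≤ 2 * δ :=
  calc euclNorm (x - y) ≤ euclNorm (x - x₀) + euclNorm (x₀ - y) := euclNorm_sub_le x x₀ y
    _ ≤ δ + δ := add_le_add hx ((euclNorm_sub_comm x₀ y).trans_le hy)
    _ = 2 * δ := (two_mul δ).symm

theorem mem_euclBall_self {δ : ℝ} (hδ : 0 ≤ δ) (x₀ : Pt n) : x₀ ∈ euclBall x₀ δ := by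
  simpa [euclBall, euclNorm_zero] using hδ

theorem isCompact_euclBall (x₀ : Pt n) (δ : ℝ) : IsCompact (euclBall x₀ δ) := by
  refine Metric.isCompact_of_isClosed_isBounded ?_ ?_
  · exact isClosed_le (continuous_euclNorm.comp (continuous_id.sub continuous_const))
      continuous_const
  · refine (Metric.isBounded_closedBall (x := x₀) (r := δ)).subset fun x hx => ?_
    rw [mem_closedBall_iff_norm]
    exact (norm_le_euclNorm _).trans hx

theorem eventually_add_smul_mem_euclBall {x x₀ : Pt n} {δ : ℝ} (hx : euclNorm (x - x₀) < δ)
    (ζ : Pt n) : ∀ᶠ s : ℝ in nhds 0, x + s • ζ ∈ euclBall x₀ δ := by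
  have hcont : Continuous fun s : ℝ => euclNorm (x + s • ζ - x₀) :=
    continuous_euclNorm.comp (by fun_prop)
  have h0 : euclNorm (x + (0 : ℝ) • ζ - x₀) < δ := by simpa using hx
  filter_upwards [hcont.continuousAt.eventually (gt_mem_nhds h0)] with s hs using hs.le

/-! ### The second derivative test for doubled functions -/

/-- The matrix of second partial derivatives. -/
def hessMat (v : Pt n → ℝ) (x : Pt n) : Matrix (Fin n) (Fin n) ℝ :=
  Matrix.of fun r s => pd r (pd s v) x

theorem isSymm_hessMat {v : Pt n → ℝ} (hv : ContDiff ℝ ∞ v) (x : Pt n) : (hessMat v x).IsSymm :=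
  Matrix.IsSymm.ext fun r s => congrFun (pd_comm hv s r) x

theorem second_deriv_nonpos_of_isLocalMax {H H₁ : ℝ → ℝ} {c : ℝ}
    (h₁ : ∀ s, HasDerivAt H (H₁ s) s) (h₂ : HasDerivAt H₁ c 0) (hmax : IsLocalMax H 0) :
    c ≤ 0 := by
  by_contra! hc
  have hderiv : deriv H = H₁ := funext fun s => (h₁ s).deriv
  have hmin : IsLocalMin H 0 := by
    refine isLocalMin_of_deriv_deriv_pos ?_ hmax.deriv_eq_zero (h₁ 0).continuousAt
    rwa [hderiv, h₂.deriv]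
  have hconst : H =ᶠ[nhds 0] fun _ => H 0 := by
    filter_upwards [hmax, hmin] with s hle hge using le_antisymm hle hge
  have hzero : H₁ =ᶠ[nhds 0] fun _ => 0 := by
    simpa [hderiv] using hconst.deriv
  rw [← h₂.deriv, hzero.deriv_eq, deriv_const] at hc
  exact lt_irrefl _ hc

theorem hasDerivAt_dotProduct_pd_line {v : Pt n → ℝ} (hv : ContDiff ℝ ∞ v) (x ζ : Pt n) :
    HasDerivAt (fun s : ℝ => ζ ⬝ᵥ fun r => pd r v (x + s • ζ)) (ζ ⬝ᵥ hessMat v x *ᵥ ζ) 0 := by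
  have hsum : HasDerivAt (fun s : ℝ => ∑ r, ζ r * pd r v (x + s • ζ))
      (∑ r, ζ r * (ζ ⬝ᵥ fun s => pd s (pd r v) (x + (0 : ℝ) • ζ))) 0 :=
    HasDerivAt.fun_sum fun r _ =>
      (hasDerivAt_line ((contDiff_pd hv r).differentiable (by simp)) x ζ 0).const_mul (ζ r)
  refine hsum.congr_deriv (Finset.sum_congr rfl fun r _ => ?_)
  rw [zero_smul, add_zero, dotProduct_comm]
  simp only [Matrix.mulVec, hessMat, Matrix.of_apply, pd_comm hv r]

theorem hessMat_sub_hessMat_le {v : Pt n → ℝ} (hv : ContDiff ℝ ∞ v) {x y ζ η : Pt n} {c₁ c₂ : ℝ}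
    (h : ∀ᶠ s : ℝ in nhds 0, v (x + s • ζ) - v (y + s • η) ≤ v x - v y + c₁ * s + c₂ * s ^ 2) :
    ζ ⬝ᵥ hessMat v x *ᵥ ζ - η ⬝ᵥ hessMat v y *ᵥ η ≤ 2 * c₂ := by
  have hdiff := hv.differentiable (by simp)
  have hquad : ∀ s : ℝ, HasDerivAt (fun s : ℝ => v x - v y + c₁ * s + c₂ * s ^ 2)
      (c₁ + 2 * c₂ * s) s := fun s => by
    refine ((((hasDerivAt_id s).const_mul c₁).const_add _).add
      (((hasDerivAt_id s).pow 2).const_mul c₂)).congr_deriv ?_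
    simp only [id, Nat.cast_ofNat]
    ring
  have hlin : HasDerivAt (fun s : ℝ => c₁ + 2 * c₂ * s) (2 * c₂) 0 := by
    simpa using ((hasDerivAt_id (0 : ℝ)).const_mul (2 * c₂)).const_add c₁
  refine sub_nonpos.1 (second_deriv_nonpos_of_isLocalMax
    (fun s => ((hasDerivAt_line hdiff x ζ s).sub (hasDerivAt_line hdiff y η s)).sub (hquad s))
    (((hasDerivAt_dotProduct_pd_line hv x ζ).sub (hasDerivAt_dotProduct_pd_line hv y η)).sub hlin)
    ?_)
  filter_upwards [h] with s hs
  simp only [Pi.sub_apply, zero_smul, add_zero, mul_zero, ne_eq, OfNat.ofNat_ne_zero,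
    not_false_eq_true, zero_pow, sub_self]
  linarith

end

section
open scoped ContDiff Matrix MatrixOrder

variable {n : ℕ} {v : Pt n → ℝ} {x₀ x y : Pt n} {δ A B : ℝ}

/-! ### The interior gradient estimate by doubling of variables -/

/-- The concave modulus of continuity that `doubled` compares `v` with. -/
def concaveModulus (δ t : ℝ) : ℝ := t - t ^ 2 / (8 * δ)

/-- The function of two points whose maximum is examined in the doubling argument: the increment
of `v`, penalised by `A` times the concave modulus and localised by a quadratic with weight `B`. -/
def doubled (v : Pt n → ℝ) (x₀ : Pt n) (δ A B : ℝ) (p : Pt n × Pt n) : ℝ :=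
  v p.1 - v p.2 - A * concaveModulus δ (euclNorm (p.1 - p.2)) -
    B * (euclNorm (p.1 - x₀) ^ 2 + euclNorm (p.2 - x₀) ^ 2)

/-- `(x, y)` is an interior, off-diagonal maximum point of `doubled` over a product of balls. -/
structure IsDoublingMax (v : Pt n → ℝ) (x₀ : Pt n) (δ A B : ℝ) (x y : Pt n) : Prop where
  left_lt : euclNorm (x - x₀) < δ
  right_lt : euclNorm (y - x₀) < δ
  ne : x ≠ y
  isMaxOn : IsMaxOn (doubled v x₀ δ A B) (euclBall x₀ δ ×ˢ euclBall x₀ δ) (x, y)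

/-- `a` is a field of symmetric matrices on `S` with ellipticity constant `lam`, trace at most `Θ`
and Lipschitz constant `K`, all in the sense of the Loewner order. -/
structure IsUniformlyElliptic (a : Pt n → Matrix (Fin n) (Fin n) ℝ) (S : Set (Pt n))
    (lam Θ K : ℝ) : Prop where
  lam_pos : 0 < lam
  lam_le : lam ≤ Θ
  lip_nonneg : 0 ≤ K
  smul_one_le : ∀ x ∈ S, lam • 1 ≤ a x
  trace_le : ∀ x ∈ S, (a x).trace ≤ Θ
  le_add_smul_one : ∀ x ∈ S, ∀ y ∈ S, a y ≤ a x + (K * euclNorm (x - y)) • 1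

theorem concaveModulus_nonneg {t : ℝ} (hδ : 0 < δ) (ht : 0 ≤ t) (htδ : t ≤ 2 * δ) :
    0 ≤ concaveModulus δ t := by
  rw [concaveModulus, sub_nonneg, div_le_iff₀ (by positivity)]
  nlinarith

theorem concaveModulus_sub_le {t τ : ℝ} (hδ : 0 < δ) (ht : 0 < t) (htδ : t ≤ 2 * δ) :
    concaveModulus δ τ - concaveModulus δ t ≤
      (1 - t / (4 * δ)) * ((τ ^ 2 - t ^ 2) / (2 * t)) := by
  have hslope : 0 ≤ 1 - t / (4 * δ) := by
    rw [sub_nonneg, div_le_one (by positivity)]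
    linarith
  have htangent : τ - t ≤ (τ ^ 2 - t ^ 2) / (2 * t) := by
    rw [le_div_iff₀ (by positivity)]
    linarith [sq_nonneg (τ - t)]
  calc concaveModulus δ τ - concaveModulus δ t
      = (1 - t / (4 * δ)) * (τ - t) - (τ - t) ^ 2 / (8 * δ) := by
        rw [concaveModulus, concaveModulus]
        field_simp
        ring
    _ ≤ (1 - t / (4 * δ)) * (τ - t) := sub_le_self _ (by positivity)
    _ ≤ (1 - t / (4 * δ)) * ((τ ^ 2 - t ^ 2) / (2 * t)) :=
        mul_le_mul_of_nonneg_left htangent hslope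

theorem exists_concaveModulus_add_smul_sub_le (hδ : 0 < δ) {z : Pt n} (hz : z ≠ 0)
    (hzδ : euclNorm z ≤ 2 * δ) (ζ : Pt n) : ∃ c₁ : ℝ, ∀ s : ℝ,
      concaveModulus δ (euclNorm (z + s • ζ)) - concaveModulus δ (euclNorm z) ≤
        c₁ * s + (ζ ⬝ᵥ ζ) / (2 * euclNorm z) * s ^ 2 := by
  have ht : 0 < euclNorm z :=
    (euclNorm_nonneg z).lt_of_ne fun h => hz (euclNorm_eq_zero.1 h.symm)
  refine ⟨(1 - euclNorm z / (4 * δ)) * (z ⬝ᵥ ζ) / euclNorm z, fun s => ?_⟩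
  have hQ : 0 ≤ (ζ ⬝ᵥ ζ) / (2 * euclNorm z) * s ^ 2 * (euclNorm z / (4 * δ)) := by
    rw [← euclNorm_sq]
    positivity
  refine (concaveModulus_sub_le hδ ht hzδ).trans ?_
  rw [euclNorm_add_smul_sq]
  calc _ = (1 - euclNorm z / (4 * δ)) * (z ⬝ᵥ ζ) / euclNorm z * s
        + (ζ ⬝ᵥ ζ) / (2 * euclNorm z) * s ^ 2
        - (ζ ⬝ᵥ ζ) / (2 * euclNorm z) * s ^ 2 * (euclNorm z / (4 * δ)) := by
        field_simp
        ring
    _ ≤ _ := sub_le_self _ hQ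

theorem concaveModulus_sub_eq_of_radial (hδ : 0 < δ) {z : Pt n} {s : ℝ} (hz : z ≠ 0)
    (hs : -(euclNorm z / 2) < s) :
    concaveModulus δ (euclNorm (z + s • ((2 * (euclNorm z)⁻¹) • z))) - concaveModulus δ (euclNorm z)
      = (2 - euclNorm z / (2 * δ)) * s + -1 / (2 * δ) * s ^ 2 := by
  have ht : 0 < euclNorm z :=
    (euclNorm_nonneg z).lt_of_ne fun h => hz (euclNorm_eq_zero.1 h.symm)
  have hline : z + s • ((2 * (euclNorm z)⁻¹) • z) = ((euclNorm z + 2 * s) / euclNorm z) • z := by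
    have hcoeff : (euclNorm z + 2 * s) / euclNorm z = 1 + s * (2 * (euclNorm z)⁻¹) := by
      field_simp
    rw [hcoeff, add_smul, one_smul, smul_smul]
  rw [hline, euclNorm_smul, abs_of_pos (div_pos (by linarith) ht), div_mul_cancel₀ _ ht.ne',
    concaveModulus, concaveModulus]
  field_simp
  ring

theorem exists_isDoublingMax {M : ℝ} (hv : Continuous v) (hδ : 0 < δ) (hA : 0 ≤ A) (hB : 0 ≤ B)
    (hvM : ∀ x ∈ euclBall x₀ δ, |v x| ≤ M) (hMB : 2 * M ≤ B * δ ^ 2)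
    {p : Pt n × Pt n} (hp : p ∈ euclBall x₀ δ ×ˢ euclBall x₀ δ)
    (hpos : 0 < doubled v x₀ δ A B p) : ∃ x y, IsDoublingMax v x₀ δ A B x y := by
  have hcont : Continuous (doubled v x₀ δ A B) := by
    have := continuous_euclNorm (n := n)
    unfold doubled concaveModulus
    fun_prop
  obtain ⟨⟨x, y⟩, ⟨hx, hy⟩, hmax⟩ := ((isCompact_euclBall x₀ δ).prod
    (isCompact_euclBall x₀ δ)).exists_isMaxOn ⟨p, hp⟩ hcont.continuousOn
  have hxy : 0 < doubled v x₀ δ A B (x, y) := hpos.trans_le (hmax hp)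
  have hmod : 0 ≤ A * concaveModulus δ (euclNorm (x - y)) := by
    refine mul_nonneg hA (concaveModulus_nonneg hδ (euclNorm_nonneg _) ?_)
    exact euclNorm_sub_le_of_mem_euclBall hx hy
  have hvx := abs_le.1 (hvM x hx)
  have hvy := abs_le.1 (hvM y hy)
  have hBx : 0 ≤ B * euclNorm (x - x₀) ^ 2 := by positivity
  have hBy : 0 ≤ B * euclNorm (y - x₀) ^ 2 := by positivity
  simp only [doubled, mul_add] at hxy
  refine ⟨x, y, lt_of_le_of_ne hx fun h => ?_, lt_of_le_of_ne hy fun h => ?_, ?_, hmax⟩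
  · rw [h] at hxy
    linarith
  · rw [h] at hxy
    linarith
  · rintro rfl
    linarith

namespace IsDoublingMax

theorem euclNorm_sub_le (h : IsDoublingMax v x₀ δ A B x y) : euclNorm (x - y) ≤ 2 * δ :=
  euclNorm_sub_le_of_mem_euclBall h.left_lt.le h.right_lt.le

theorem euclNorm_sub_pos (h : IsDoublingMax v x₀ δ A B x y) : 0 < euclNorm (x - y) :=
  (euclNorm_nonneg _).lt_of_ne fun h0 => h.ne (sub_eq_zero.1 (euclNorm_eq_zero.1 h0.symm))

theorem hessMat_le (h : IsDoublingMax v x₀ δ A B x y) (hv : ContDiff ℝ ∞ v) (hA : 0 ≤ A)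
    {ζ η : Pt n} {c₁ c₂ : ℝ}
    (hmod : ∀ᶠ s : ℝ in nhds 0, concaveModulus δ (euclNorm (x - y + s • (ζ - η))) -
      concaveModulus δ (euclNorm (x - y)) ≤ c₁ * s + c₂ * s ^ 2) :
    ζ ⬝ᵥ hessMat v x *ᵥ ζ - η ⬝ᵥ hessMat v y *ᵥ η ≤
      2 * (A * c₂ + B * (ζ ⬝ᵥ ζ + η ⬝ᵥ η)) := by
  refine hessMat_sub_hessMat_le hv
    (c₁ := A * c₁ + B * (2 * ((x - x₀) ⬝ᵥ ζ) + 2 * ((y - x₀) ⬝ᵥ η))) ?_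
  filter_upwards [hmod, eventually_add_smul_mem_euclBall h.left_lt ζ,
    eventually_add_smul_mem_euclBall h.right_lt η] with s hs hxs hys
  have hmax : doubled v x₀ δ A B (x + s • ζ, y + s • η) ≤ doubled v x₀ δ A B (x, y) :=
    h.isMaxOn (Set.mk_mem_prod hxs hys)
  have hxy : x + s • ζ - (y + s • η) = x - y + s • (ζ - η) := by
    rw [smul_sub]
    abel
  rw [doubled, doubled, hxy, add_sub_right_comm x, add_sub_right_comm y, euclNorm_add_smul_sq,
    euclNorm_add_smul_sq] at hmax
  linarith [mul_le_mul_of_nonneg_left hs hA]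

theorem hessMat_sub_le (h : IsDoublingMax v x₀ δ A B x y) (hv : ContDiff ℝ ∞ v) (hA : 0 ≤ A) :
    hessMat v x - hessMat v y ≤ (4 * B) • 1 := by
  refine le_of_isSymm_of_dotProduct_mulVec_le ((isSymm_hessMat hv x).sub (isSymm_hessMat hv y))
    (Matrix.isSymm_one.smul _) fun ζ => ?_
  have := h.hessMat_le hv hA (ζ := ζ) (η := ζ) (c₁ := 0) (c₂ := 0) (by simp)
  simp only [Matrix.sub_mulVec, dotProduct_sub, Matrix.smul_mulVec, Matrix.one_mulVec,
    dotProduct_smul, smul_eq_mul]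
  linarith

theorem hessMat_sub_normal_le (h : IsDoublingMax v x₀ δ A B x y) (hv : ContDiff ℝ ∞ v)
    (hδ : 0 < δ) (hA : 0 ≤ A) {e : Pt n} (he : e = (euclNorm (x - y))⁻¹ • (x - y))
    (hee : e ⬝ᵥ e = 1) : e ⬝ᵥ (hessMat v x - hessMat v y) *ᵥ e ≤ -(A / δ - 4 * B) := by
  have hdir : e - -e = (2 * (euclNorm (x - y))⁻¹) • (x - y) := by
    rw [sub_neg_eq_add, ← two_smul ℝ, he, smul_smul]
  have hmod : ∀ᶠ s : ℝ in nhds 0, concaveModulus δ (euclNorm (x - y + s • (e - -e))) -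
      concaveModulus δ (euclNorm (x - y)) ≤
        (2 - euclNorm (x - y) / (2 * δ)) * s + -1 / (2 * δ) * s ^ 2 := by
    filter_upwards [lt_mem_nhds (neg_lt_zero.2 (half_pos h.euclNorm_sub_pos))] with s hs
    rw [hdir]
    exact (concaveModulus_sub_eq_of_radial hδ (sub_ne_zero.2 h.ne) hs).le
  have := h.hessMat_le hv hA hmod
  simp only [Matrix.mulVec_neg, neg_dotProduct, dotProduct_neg, neg_neg, hee] at this
  rw [Matrix.sub_mulVec, dotProduct_sub]
  refine this.trans_eq ?_
  field_simp
  ring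

theorem hessMat_left_le (h : IsDoublingMax v x₀ δ A B x y) (hv : ContDiff ℝ ∞ v) (hδ : 0 < δ)
    (hA : 0 ≤ A) : hessMat v x ≤ (A / euclNorm (x - y) + 2 * B) • 1 := by
  refine le_of_isSymm_of_dotProduct_mulVec_le (isSymm_hessMat hv x) (Matrix.isSymm_one.smul _)
    fun ζ => ?_
  obtain ⟨c₁, hc₁⟩ := exists_concaveModulus_add_smul_sub_le hδ (sub_ne_zero.2 h.ne)
    h.euclNorm_sub_le ζ
  have := h.hessMat_le hv hA (ζ := ζ) (η := 0) (Eventually.of_forall (by simpa using hc₁))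
  simp only [zero_dotProduct, sub_zero, add_zero] at this
  simp only [Matrix.smul_mulVec, Matrix.one_mulVec, dotProduct_smul, smul_eq_mul]
  refine this.trans_eq ?_
  have := h.euclNorm_sub_pos
  field_simp

theorem neg_hessMat_right_le (h : IsDoublingMax v x₀ δ A B x y) (hv : ContDiff ℝ ∞ v)
    (hδ : 0 < δ) (hA : 0 ≤ A) : -hessMat v y ≤ (A / euclNorm (x - y) + 2 * B) • 1 := by
  refine le_of_isSymm_of_dotProduct_mulVec_le (isSymm_hessMat hv y).neg (Matrix.isSymm_one.smul _)
    fun ζ => ?_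
  obtain ⟨c₁, hc₁⟩ := exists_concaveModulus_add_smul_sub_le hδ (sub_ne_zero.2 h.ne)
    h.euclNorm_sub_le (-ζ)
  have := h.hessMat_le hv hA (ζ := 0) (η := ζ) (Eventually.of_forall (by simpa using hc₁))
  simp only [zero_dotProduct, zero_sub, zero_add] at this
  simp only [Matrix.neg_mulVec, dotProduct_neg, Matrix.smul_mulVec, Matrix.one_mulVec,
    dotProduct_smul, smul_eq_mul]
  refine this.trans_eq ?_
  have := h.euclNorm_sub_pos
  field_simp

variable {a : Pt n → Matrix (Fin n) (Fin n) ℝ} {lam Θ K F : ℝ}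

theorem slope_le (h : IsDoublingMax v x₀ δ A B x y) (hv : ContDiff ℝ ∞ v) (hδ : 0 < δ)
    (hA : 0 ≤ A) (hB : 0 ≤ B) (ha : IsUniformlyElliptic a (euclBall x₀ δ) lam Θ K)
    (hK : 4 * K * δ ≤ lam) (hnK : 12 * n * K * δ ≤ lam)
    (hF : ∀ x ∈ euclBall x₀ δ, |(a x * hessMat v x).trace| ≤ F) :
    A ≤ 4 * δ / lam * (2 * F + 5 * Θ * B) := by
  set t := euclNorm (x - y) with ht
  set e : Pt n := t⁻¹ • (x - y) with he
  have htpos : 0 < t := h.euclNorm_sub_pos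
  have ht2 : t ≤ 2 * δ := h.euclNorm_sub_le
  have hlam := ha.lam_pos
  have hKt : K * t ≤ lam / 2 := by linarith [mul_le_mul_of_nonneg_left ht2 ha.lip_nonneg]
  have hee : e ⬝ᵥ e = 1 := by
    rw [← euclNorm_sq, he, euclNorm_smul, ← ht, abs_of_pos (inv_pos.2 htpos),
      inv_mul_cancel₀ htpos.ne', one_pow]
  have hx : x ∈ euclBall x₀ δ := h.left_lt.le
  have hy : y ∈ euclBall x₀ δ := h.right_lt.le
  have hcomp := trace_mul_sub_trace_mul_le hee hlam.le (mul_nonneg ha.lip_nonneg htpos.le) hKt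
    (by positivity) (by positivity) (ha.smul_one_le x hx) (ha.trace_le x hx)
    (by simpa only [euclNorm_sub_comm y x] using ha.le_add_smul_one y hy x hx)
    (ha.le_add_smul_one x hx y hy) (h.hessMat_sub_le hv hA)
    (h.hessMat_sub_normal_le hv hδ hA he hee) (h.hessMat_left_le hv hδ hA)
    (h.neg_hessMat_right_le hv hδ hA)
  rw [Fintype.card_fin, ← ht] at hcomp
  have herr : 3 * n * (K * t) * (A / t + 2 * B) ≤ lam / (4 * δ) * A + lam * B := by
    have hsplit : 3 * n * (K * t) * (A / t + 2 * B) = 3 * n * K * A + 6 * n * K * t * B := by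
      field_simp
      ring
    rw [hsplit]
    gcongr
    · rw [le_div_iff₀ (by positivity)]
      linarith
    · have := mul_le_mul_of_nonneg_left ht2
        (mul_nonneg (by positivity : 0 ≤ 6 * (n : ℝ)) ha.lip_nonneg)
      linarith
  have hnormal : lam / 2 * (A / δ - 4 * B) = 2 * (lam / (4 * δ) * A) - 2 * (lam * B) := by
    field_simp
    ring
  have hslope : lam / (4 * δ) * A ≤ 2 * F + 5 * Θ * B := by
    linarith [(abs_le.1 (hF x hx)).1, (abs_le.1 (hF y hy)).2,
      mul_le_mul_of_nonneg_right ha.lam_le hB]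
  calc A = 4 * δ / lam * (lam / (4 * δ) * A) := by field_simp
    _ ≤ 4 * δ / lam * (2 * F + 5 * Θ * B) := by gcongr

end IsDoublingMax

theorem sub_le_of_isUniformlyElliptic {a : Pt n → Matrix (Fin n) (Fin n) ℝ} {lam Θ K F M : ℝ}
    (hv : ContDiff ℝ ∞ v) (hδ : 0 < δ) (ha : IsUniformlyElliptic a (euclBall x₀ δ) lam Θ K)
    (hK : 4 * K * δ ≤ lam) (hnK : 12 * n * K * δ ≤ lam) (hA : 0 ≤ A)
    (hvM : ∀ x ∈ euclBall x₀ δ, |v x| ≤ M)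
    (hF : ∀ x ∈ euclBall x₀ δ, |(a x * hessMat v x).trace| ≤ F)
    (hAlt : 4 * δ / lam * (2 * F + 5 * Θ * (2 * M / δ ^ 2)) < A)
    (hx : x ∈ euclBall x₀ δ) (hy : y ∈ euclBall x₀ δ) :
    v x - v y ≤ A * concaveModulus δ (euclNorm (x - y)) +
      2 * M / δ ^ 2 * (euclNorm (x - x₀) ^ 2 + euclNorm (y - x₀) ^ 2) := by
  have hM : 0 ≤ M := (abs_nonneg _).trans (hvM x hx)
  by_contra! hlt
  obtain ⟨x', y', hmax⟩ := exists_isDoublingMax (B := 2 * M / δ ^ 2) hv.continuous hδ hA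
    (by positivity) hvM (div_mul_cancel₀ _ (by positivity)).ge (Set.mk_mem_prod hx hy)
    (by rw [doubled]; linarith)
  exact hAlt.not_ge (hmax.slope_le hv hδ hA (by positivity) ha hK hnK hF)

theorem abs_sub_le_of_isUniformlyElliptic {a : Pt n → Matrix (Fin n) (Fin n) ℝ}
    {lam Θ K F M : ℝ} (hv : ContDiff ℝ ∞ v) (hδ : 0 < δ)
    (ha : IsUniformlyElliptic a (euclBall x₀ δ) lam Θ K)
    (hK : 4 * K * δ ≤ lam) (hnK : 12 * n * K * δ ≤ lam) (hA : 0 ≤ A)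
    (hvM : ∀ x ∈ euclBall x₀ δ, |v x| ≤ M)
    (hF : ∀ x ∈ euclBall x₀ δ, |(a x * hessMat v x).trace| ≤ F)
    (hAlt : 4 * δ / lam * (2 * F + 5 * Θ * (2 * M / δ ^ 2)) < A) (hx : x ∈ euclBall x₀ δ) :
    |v x - v x₀| ≤ (A + 2 * M / δ ^ 2 * euclNorm (x - x₀)) * euclNorm (x - x₀) := by
  have hx₀ : x₀ ∈ euclBall x₀ δ := mem_euclBall_self hδ.le x₀
  have hle := sub_le_of_isUniformlyElliptic hv hδ ha hK hnK hA hvM hF hAlt hx hx₀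
  have hge := sub_le_of_isUniformlyElliptic hv hδ ha hK hnK hA hvM hF hAlt hx₀ hx
  rw [euclNorm_sub_comm x₀ x] at hge
  have hmod : A * concaveModulus δ (euclNorm (x - x₀)) ≤ A * euclNorm (x - x₀) :=
    mul_le_mul_of_nonneg_left (sub_le_self _ (by positivity)) hA
  rw [sub_self, euclNorm_zero] at hle hge
  rw [abs_le]
  constructor <;> linarith

theorem abs_pd_le_of_abs_sub_le (hv : Differentiable ℝ v) (hδ : 0 < δ)
    (h : ∀ x ∈ euclBall x₀ δ,
      |v x - v x₀| ≤ (A + B * euclNorm (x - x₀)) * euclNorm (x - x₀)) (i : Fin n) :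
    |pd i v x₀| ≤ A := by
  have hderiv : HasDerivWithinAt (fun s : ℝ => v (x₀ + s • Pi.single i 1)) (pd i v x₀)
      (Set.Ioi 0) 0 := by
    simpa using (hasDerivAt_line hv x₀ (Pi.single i 1) 0).hasDerivWithinAt
  rw [hasDerivWithinAt_iff_tendsto_slope' (by simp)] at hderiv
  have hlim : Tendsto (fun s : ℝ => A + B * s) (nhdsWithin 0 (Set.Ioi 0)) (nhds A) := by
    have hcont : Continuous fun s : ℝ => A + B * s := by fun_prop
    simpa using (hcont.tendsto 0).mono_left (nhdsWithin_le_nhds (s := Set.Ioi 0))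
  refine le_of_tendsto_of_tendsto hderiv.abs hlim ?_
  filter_upwards [mem_nhdsWithin_of_mem_nhds (Iic_mem_nhds hδ), self_mem_nhdsWithin]
    with s (hsδ : s ≤ δ) (hs : 0 < s)
  have hnorm : euclNorm (x₀ + s • Pi.single i 1 - x₀) = s := by
    rw [add_sub_cancel_left, euclNorm_smul, euclNorm_single_one, abs_of_pos hs, mul_one]
  have hinc := h (x₀ + s • Pi.single i 1) (hnorm.trans_le hsδ)
  rw [hnorm] at hinc
  rw [slope_def_field, abs_div, sub_zero, abs_of_pos hs, div_le_iff₀ hs]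
  simpa using hinc

theorem abs_pd_le_of_isUniformlyElliptic {a : Pt n → Matrix (Fin n) (Fin n) ℝ}
    {lam Θ K F M : ℝ} (hv : ContDiff ℝ ∞ v) (hδ : 0 < δ)
    (ha : IsUniformlyElliptic a (euclBall x₀ δ) lam Θ K)
    (hK : 4 * K * δ ≤ lam) (hnK : 12 * n * K * δ ≤ lam)
    (hvM : ∀ x ∈ euclBall x₀ δ, |v x| ≤ M)
    (hF : ∀ x ∈ euclBall x₀ δ, |(a x * hessMat v x).trace| ≤ F) (i : Fin n) :
    |pd i v x₀| ≤ 4 / lam * (2 * (δ * F) + 10 * Θ * (M / δ)) := by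
  have hx₀ : x₀ ∈ euclBall x₀ δ := mem_euclBall_self hδ.le x₀
  have hM : 0 ≤ M := (abs_nonneg _).trans (hvM x₀ hx₀)
  have hF0 : 0 ≤ F := (abs_nonneg _).trans (hF x₀ hx₀)
  have hlam := ha.lam_pos
  have hΘ : 0 < Θ := hlam.trans_le ha.lam_le
  have hslope : 4 / lam * (2 * (δ * F) + 10 * Θ * (M / δ)) =
      4 * δ / lam * (2 * F + 5 * Θ * (2 * M / δ ^ 2)) := by
    field_simp
    ring
  rw [hslope]
  refine le_of_forall_gt_imp_ge_of_dense fun A hA => ?_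
  have hA0 : 0 ≤ A := le_of_lt (lt_of_le_of_lt (by positivity) hA)
  exact abs_pd_le_of_abs_sub_le (hv.differentiable (by simp)) hδ
    (fun x hx => abs_sub_le_of_isUniformlyElliptic hv hδ ha hK hnK hA0 hvM hF hA hx) i

end

section
open scoped ContDiff
open Finset.HasAntidiagonal (antidiagonal mem_antidiagonal)

variable {n : ℕ} {f g : Pt n → ℝ} {x : Pt n}

/-! ### Iterated partial derivatives -/

/-- The iterated partial derivative along a word of coordinate directions, the head of the word
being differentiated first. -/
def iterPd : List (Fin n) → (Pt n → ℝ) → Pt n → ℝ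
  | [], f => f
  | i :: J, f => iterPd J (pd i f)

theorem contDiff_iterPd (hf : ContDiff ℝ ∞ f) (J : List (Fin n)) :
    ContDiff ℝ ∞ (iterPd J f) := by
  induction J generalizing f with
  | nil => exact hf
  | cons i _ ih => exact ih (contDiff_pd hf i)

theorem pd_iterPd (hf : ContDiff ℝ ∞ f) (i : Fin n) (J : List (Fin n)) :
    pd i (iterPd J f) = iterPd J (pd i f) := by
  induction J generalizing f with
  | nil => rfl
  | cons j J ih => rw [iterPd, iterPd, ih (contDiff_pd hf j), pd_comm hf]

theorem iterPd_add (hf : ContDiff ℝ ∞ f) (hg : ContDiff ℝ ∞ g) (J : List (Fin n)) :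
    iterPd J (f + g) = iterPd J f + iterPd J g := by
  induction J generalizing f g with
  | nil => rfl
  | cons j J ih =>
    rw [iterPd, pd_add (hf.differentiable (by simp)) (hg.differentiable (by simp)),
      ih (contDiff_pd hf j) (contDiff_pd hg j), iterPd, iterPd]

theorem iterPd_const (c : ℝ) {J : List (Fin n)} (hJ : J ≠ []) :
    iterPd J (fun _ => c) = 0 := by
  induction J generalizing c with
  | nil => exact absurd rfl hJ
  | cons j J ih =>
    rw [iterPd, pd_const]
    by_cases h : J = []
    · rw [h, iterPd]
    · exact ih 0 h

theorem iterPd_sum {ι : Type*} (s : Finset ι) {F : ι → Pt n → ℝ}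
    (hF : ∀ a, ContDiff ℝ ∞ (F a)) (J : List (Fin n)) :
    iterPd J (∑ a ∈ s, F a) = ∑ a ∈ s, iterPd J (F a) := by
  induction J generalizing F with
  | nil => rfl
  | cons j J ih =>
    rw [iterPd, pd_sum s fun a _ => (hF a).differentiable (by simp),
      ih fun a => contDiff_pd (hF a) j]
    rfl

theorem iterPd_cons_mul (hf : ContDiff ℝ ∞ f) (hg : ContDiff ℝ ∞ g) (i : Fin n)
    (J : List (Fin n)) :
    iterPd (i :: J) (f * g) = iterPd J (f * pd i g) + iterPd J (pd i f * g) := by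
  have hleft : ContDiff ℝ ∞ (f * pd i g) := hf.mul (contDiff_pd hg i)
  have hright : ContDiff ℝ ∞ (pd i f * g) := (contDiff_pd hf i).mul hg
  rw [iterPd, pd_mul (hf.differentiable (by simp)) (hg.differentiable (by simp)), add_comm,
    iterPd_add hleft hright]

theorem pd_congr (h : f =ᶠ[nhds x] g) (i : Fin n) : pd i f =ᶠ[nhds x] pd i g := by
  filter_upwards [h.fderiv (𝕜 := ℝ)] with y hy
  rw [pd, pd, hy]

theorem iterPd_congr (h : f =ᶠ[nhds x] g) (J : List (Fin n)) : iterPd J f x = iterPd J g x := by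
  induction J generalizing f g with
  | nil => exact h.self_of_nhds
  | cons i _ ih => exact ih (pd_congr h i)

theorem exists_abs_iterPd_le {ι : Type*} [Finite ι] {w : ι → Pt n → ℝ}
    (hw : ∀ A, ContDiff ℝ ∞ (w A)) {S : Set (Pt n)} (hS : IsCompact S) (k : ℕ) :
    ∃ B : ℝ, 0 ≤ B ∧ ∀ x ∈ S, ∀ A, ∀ J : List (Fin n), J.length = k → |iterPd J (w A) x| ≤ B := by
  have hbound : ∀ p : ι × List (Fin n), ∃ B : ℝ, ∀ x ∈ S, |iterPd p.2 (w p.1) x| ≤ B := fun p =>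
    hS.exists_bound_of_continuousOn (contDiff_iterPd (hw p.1) p.2).continuous.continuousOn
  choose B hB using hbound
  obtain ⟨C, hC⟩ := ((Set.finite_univ.prod (List.finite_length_eq (Fin n) k)).image B).bddAbove
  exact ⟨max C 0, le_max_right _ _, fun x hx A J hJ => (hB (A, J) x hx).trans <|
    (hC ⟨(A, J), ⟨Set.mem_univ _, hJ⟩, rfl⟩).trans (le_max_left _ _)⟩

theorem sum_antidiagonal_choose_succ_mul_mul (α β : ℕ → ℝ) (k : ℕ) :
    ∑ p ∈ antidiagonal (k + 1), ((k + 1).choose p.1 : ℝ) * (α p.1 * β p.2) =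
      ∑ p ∈ antidiagonal k, (k.choose p.1 : ℝ) * (α p.1 * β (p.2 + 1)) +
        ∑ p ∈ antidiagonal k, (k.choose p.1 : ℝ) * (α (p.1 + 1) * β p.2) := by
  rw [Finset.sum_antidiagonal_choose_succ_mul fun a b => α a * β b]
  congr 1
  refine Finset.sum_congr rfl fun p hp => ?_
  rw [Nat.choose_symm_of_eq_add (mem_antidiagonal.1 hp).symm]

theorem abs_iterPd_mul_le (hf : ContDiff ℝ ∞ f) (hg : ContDiff ℝ ∞ g) {α β : ℕ → ℝ}
    (J : List (Fin n))
    (hα : ∀ J' : List (Fin n), J'.length ≤ J.length → |iterPd J' f x| ≤ α J'.length)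
    (hβ : ∀ J' : List (Fin n), J'.length ≤ J.length → |iterPd J' g x| ≤ β J'.length) :
    |iterPd J (f * g) x| ≤
      ∑ p ∈ antidiagonal J.length, (J.length.choose p.1 : ℝ) * (α p.1 * β p.2) := by
  induction J generalizing f g α β with
  | nil =>
    have hf0 := hα [] le_rfl
    have hg0 := hβ [] le_rfl
    simpa [iterPd, abs_mul] using
      mul_le_mul hf0 hg0 (abs_nonneg _) ((abs_nonneg _).trans hf0)
  | cons i J ih =>
    rw [iterPd_cons_mul hf hg, List.length_cons, sum_antidiagonal_choose_succ_mul_mul]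
    refine (abs_add_le _ _).trans (add_le_add ?_ ?_)
    · exact ih hf (contDiff_pd hg i) (β := fun m => β (m + 1))
        (fun J' hJ' => hα J' (by simp; omega)) fun J' hJ' => hβ (i :: J') (by simpa using hJ')
    · exact ih (contDiff_pd hf i) hg (α := fun m => α (m + 1))
        (fun J' hJ' => hα (i :: J') (by simpa using hJ')) fun J' hJ' => hβ J' (by simp; omega)

theorem abs_iterPd_mul_sub_mul_le (hf : ContDiff ℝ ∞ f) (hg : ContDiff ℝ ∞ g) {α β : ℕ → ℝ}
    (J : List (Fin n)) (hα0 : α 0 = 0)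
    (hα : ∀ i, ∀ J' : List (Fin n), J'.length < J.length →
      |iterPd J' (pd i f) x| ≤ α (J'.length + 1))
    (hβ : ∀ J' : List (Fin n), J'.length < J.length → |iterPd J' g x| ≤ β J'.length) :
    |iterPd J (f * g) x - f x * iterPd J g x| ≤
      ∑ p ∈ antidiagonal J.length, (J.length.choose p.1 : ℝ) * (α p.1 * β p.2) := by
  induction J generalizing g β with
  | nil => simp [iterPd, hα0]
  | cons i J ih =>
    have hcomm := ih (contDiff_pd hg i) (β := fun m => β (m + 1))
      (fun i J' hJ' => hα i J' (by simp; omega))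
      fun J' hJ' => hβ (i :: J') (by simpa using hJ')
    have hprod := abs_iterPd_mul_le (contDiff_pd hf i) hg J (α := fun m => α (m + 1))
      (fun J' hJ' => hα i J' (by simp; omega)) fun J' hJ' => hβ J' (by simp; omega)
    rw [iterPd_cons_mul hf hg, iterPd, Pi.add_apply, add_sub_right_comm, List.length_cons,
      sum_antidiagonal_choose_succ_mul_mul]
    exact (abs_add_le _ _).trans (add_le_add hcomm hprod)

/-! ### Factorial weights -/

/-- `j! / (j+1)²`: the factorial growth of the derivatives of an analytic function, damped so that
the weights are stable, up to a constant, under the convolution in the Leibniz rule. -/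
def factWeight (j : ℕ) : ℝ := (j.factorial : ℝ) / ((j : ℝ) + 1) ^ 2

theorem factWeight_pos (j : ℕ) : 0 < factWeight j := by
  unfold factWeight
  positivity

theorem factWeight_zero : factWeight 0 = 1 := by simp [factWeight]

theorem factWeight_le_factorial (j : ℕ) : factWeight j ≤ j.factorial :=
  div_le_self (by positivity) (one_le_pow₀ (by simp))

theorem add_two_mul_factWeight_le (j : ℕ) :
    (j + 2 : ℝ) * factWeight j ≤ 8 * factWeight (j + 1) := by
  have hpoly : ((j : ℝ) + 2) * ((j : ℝ) + 1 + 1) ^ 2 ≤ 8 * ((j : ℝ) + 1) * ((j : ℝ) + 1) ^ 2 := by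
    have hj : (0 : ℝ) ≤ j := j.cast_nonneg
    nlinarith [mul_nonneg hj hj, mul_nonneg (mul_nonneg hj hj) hj]
  rw [factWeight, factWeight, Nat.factorial_succ, mul_div_assoc', mul_div_assoc',
    div_le_div_iff₀ (by positivity) (by positivity)]
  push_cast
  linarith [mul_le_mul_of_nonneg_left hpoly (j.factorial.cast_nonneg (α := ℝ))]

theorem sum_range_one_div_sq_le (k : ℕ) :
    ∑ i ∈ Finset.range (k + 1), 1 / ((i : ℝ) + 1) ^ 2 ≤ 2 - 1 / ((k : ℝ) + 1) := by
  induction k with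
  | zero => norm_num
  | succ k ih =>
    have hstep : 1 / ((k : ℝ) + 1 + 1) ^ 2 ≤ 1 / ((k : ℝ) + 1) - 1 / ((k : ℝ) + 1 + 1) := by
      rw [div_sub_div _ _ (by positivity) (by positivity),
        div_le_div_iff₀ (by positivity) (by positivity)]
      nlinarith [k.cast_nonneg (α := ℝ)]
    rw [Finset.sum_range_succ]
    push_cast
    linarith

theorem choose_mul_factWeight_mul_factWeight_le (a b : ℕ) :
    ((a + b).choose a : ℝ) * (factWeight a * factWeight b) ≤
      2 * factWeight (a + b) * (1 / ((a : ℝ) + 1) ^ 2 + 1 / ((b : ℝ) + 1) ^ 2) := by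
  have hchoose : ((a + b).choose a : ℝ) * a.factorial * b.factorial = (a + b).factorial := by
    have := Nat.choose_mul_factorial_mul_factorial (Nat.le_add_right a b)
    rw [Nat.add_sub_cancel_left] at this
    exact_mod_cast this
  have hsq : ((a : ℝ) + b + 1) ^ 2 ≤ 2 * (((b : ℝ) + 1) ^ 2 + ((a : ℝ) + 1) ^ 2) := by
    nlinarith [sq_nonneg ((a : ℝ) - b), a.cast_nonneg (α := ℝ), b.cast_nonneg (α := ℝ)]
  calc ((a + b).choose a : ℝ) * (factWeight a * factWeight b)
      = (a + b).factorial * (1 / (((a : ℝ) + 1) ^ 2 * ((b : ℝ) + 1) ^ 2)) := by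
        rw [← hchoose, factWeight, factWeight]
        field_simp
    _ ≤ (a + b).factorial * ((2 * (((b : ℝ) + 1) ^ 2 + ((a : ℝ) + 1) ^ 2) / ((a : ℝ) + b + 1) ^ 2) /
          (((a : ℝ) + 1) ^ 2 * ((b : ℝ) + 1) ^ 2)) := by
        gcongr
        rwa [le_div_iff₀ (by positivity), one_mul]
    _ = _ := by
        rw [factWeight]
        push_cast
        field_simp

theorem sum_choose_mul_factWeight_le (k : ℕ) :
    ∑ p ∈ antidiagonal k, (k.choose p.1 : ℝ) * (factWeight p.1 * factWeight p.2) ≤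
      8 * factWeight k := by
  have hfst : ∑ p ∈ antidiagonal k, 1 / ((p.1 : ℝ) + 1) ^ 2 =
      ∑ i ∈ Finset.range (k + 1), 1 / ((i : ℝ) + 1) ^ 2 :=
    Finset.Nat.sum_antidiagonal_eq_sum_range_succ (fun i _ => 1 / ((i : ℝ) + 1) ^ 2) k
  have hsnd : ∑ p ∈ antidiagonal k, 1 / ((p.2 : ℝ) + 1) ^ 2 =
      ∑ p ∈ antidiagonal k, 1 / ((p.1 : ℝ) + 1) ^ 2 := by
    rw [← Finset.Nat.sum_antidiagonal_swap]
    rfl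
  have hsum : ∑ i ∈ Finset.range (k + 1), 1 / ((i : ℝ) + 1) ^ 2 ≤ 2 :=
    (sum_range_one_div_sq_le k).trans (sub_le_self _ (by positivity))
  calc ∑ p ∈ antidiagonal k, (k.choose p.1 : ℝ) * (factWeight p.1 * factWeight p.2)
      ≤ ∑ p ∈ antidiagonal k,
          2 * factWeight k * (1 / ((p.1 : ℝ) + 1) ^ 2 + 1 / ((p.2 : ℝ) + 1) ^ 2) := by
        refine Finset.sum_le_sum fun p hp => ?_
        rw [← mem_antidiagonal.1 hp]
        exact choose_mul_factWeight_mul_factWeight_le p.1 p.2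
    _ = 4 * factWeight k * ∑ i ∈ Finset.range (k + 1), 1 / ((i : ℝ) + 1) ^ 2 := by
        rw [← Finset.mul_sum, Finset.sum_add_distrib, hsnd, hfst]
        ring
    _ ≤ 4 * factWeight k * 2 := by
        have := factWeight_pos k
        gcongr
    _ = 8 * factWeight k := by ring

/-- The majorant `ρ^j · j! / (j+1)²`, with an extra factor `τ` at the top order `j = k`. -/
def jetWeight (k : ℕ) (τ ρ : ℝ) (j : ℕ) : ℝ :=
  (if j = k then τ else 1) * (ρ ^ j * factWeight j)

theorem jetWeight_of_ne {k j : ℕ} (h : j ≠ k) (τ ρ : ℝ) :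
    jetWeight k τ ρ j = ρ ^ j * factWeight j := by
  rw [jetWeight, if_neg h, one_mul]

theorem jetWeight_self (k : ℕ) (τ ρ : ℝ) : jetWeight k τ ρ k = τ * (ρ ^ k * factWeight k) := by
  rw [jetWeight, if_pos rfl]

theorem jetWeight_one (k : ℕ) (ρ : ℝ) (j : ℕ) : jetWeight k 1 ρ j = ρ ^ j * factWeight j := by
  rw [jetWeight, ite_self, one_mul]

section
variable {k : ℕ} {τ ρ : ℝ}

theorem le_jetWeight (hτ : 1 ≤ τ) (hρ : 0 ≤ ρ) (j : ℕ) :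
    ρ ^ j * factWeight j ≤ jetWeight k τ ρ j := by
  have := factWeight_pos j
  refine le_mul_of_one_le_left (by positivity) ?_
  split_ifs <;> linarith

theorem jetWeight_le (hτ : 1 ≤ τ) (hρ : 0 ≤ ρ) (j : ℕ) :
    jetWeight k τ ρ j ≤ τ * (ρ ^ j * factWeight j) := by
  have := factWeight_pos j
  refine mul_le_mul_of_nonneg_right ?_ (by positivity)
  split_ifs <;> linarith

theorem jetWeight_nonneg (hτ : 1 ≤ τ) (hρ : 0 ≤ ρ) (j : ℕ) : 0 ≤ jetWeight k τ ρ j :=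
  (mul_nonneg (pow_nonneg hρ j) (factWeight_pos j).le).trans (le_jetWeight hτ hρ j)

theorem jetWeight_mul_jetWeight_le (hk : 1 ≤ k) (hτ : 1 ≤ τ) (hρ : 0 ≤ ρ) {a b : ℕ}
    (hab : a + b ≤ k) : jetWeight k τ ρ a * jetWeight k τ ρ b ≤
      (if a + b = k then τ else 1) * ρ ^ (a + b) * (factWeight a * factWeight b) := by
  have htop : (if a = k then τ else 1) * (if b = k then τ else 1) ≤
      (if a + b = k then τ else 1) := by
    split_ifs <;> first | omega | linarith
  have ha := factWeight_pos a
  have hb := factWeight_pos b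
  calc jetWeight k τ ρ a * jetWeight k τ ρ b
      = (if a = k then τ else 1) * (if b = k then τ else 1) *
          (ρ ^ (a + b) * (factWeight a * factWeight b)) := by
        rw [jetWeight, jetWeight, pow_add]
        ring
    _ ≤ (if a + b = k then τ else 1) * (ρ ^ (a + b) * (factWeight a * factWeight b)) := by
        gcongr
    _ = _ := by ring

theorem sum_choose_mul_jetWeight_le (hk : 1 ≤ k) (hτ : 1 ≤ τ) (hρ : 0 ≤ ρ) {j : ℕ} (hj : j ≤ k) :
    ∑ p ∈ antidiagonal j, (j.choose p.1 : ℝ) * (jetWeight k τ ρ p.1 * jetWeight k τ ρ p.2) ≤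
      8 * jetWeight k τ ρ j := by
  have hcoeff : 0 ≤ (if j = k then τ else 1) * ρ ^ j := by
    refine mul_nonneg ?_ (pow_nonneg hρ j)
    split_ifs <;> linarith
  calc ∑ p ∈ antidiagonal j,
        (j.choose p.1 : ℝ) * (jetWeight k τ ρ p.1 * jetWeight k τ ρ p.2)
      ≤ ∑ p ∈ antidiagonal j, (if j = k then τ else 1) * ρ ^ j *
          ((j.choose p.1 : ℝ) * (factWeight p.1 * factWeight p.2)) := by
        refine Finset.sum_le_sum fun p hp => ?_
        obtain rfl := mem_antidiagonal.1 hp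
        rw [mul_left_comm _ ((_ : ℕ) : ℝ)]
        exact mul_le_mul_of_nonneg_left (jetWeight_mul_jetWeight_le hk hτ hρ hj)
          (Nat.cast_nonneg _)
    _ ≤ (if j = k then τ else 1) * ρ ^ j * (8 * factWeight j) := by
        rw [← Finset.mul_sum]
        exact mul_le_mul_of_nonneg_left (sum_choose_mul_factWeight_le j) hcoeff
    _ = 8 * jetWeight k τ ρ j := by
        rw [jetWeight]
        ring

theorem choose_succ_mul_factWeight_le {a b : ℕ} :
    ((a + b + 1).choose (a + 1) : ℝ) * (factWeight a * factWeight (b + 1)) ≤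
      (a + b + 1) * (((a + b + 1).choose a : ℝ) * (factWeight a * factWeight (b + 1))) := by
  have hchoose : (a + b + 1).choose (a + 1) ≤ (a + b + 1) * (a + b + 1).choose a :=
    calc (a + b + 1).choose (a + 1) ≤ (a + b + 1).choose (a + 1) * (a + 1) :=
          Nat.le_mul_of_pos_right _ a.succ_pos
      _ = (a + b + 1) * (a + b).choose a := (Nat.add_one_mul_choose_eq _ _).symm
      _ ≤ (a + b + 1) * (a + b + 1).choose a :=
          Nat.mul_le_mul_left _ (Nat.choose_le_choose _ (Nat.le_succ _))
  have ha := factWeight_pos a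
  have hb := factWeight_pos (b + 1)
  rw [← mul_assoc (_ + 1 : ℝ)]
  exact mul_le_mul_of_nonneg_right (by exact_mod_cast hchoose) (by positivity)

theorem sum_choose_mul_le_of_apply_zero_eq_zero {α β : ℕ → ℝ} {a b : ℝ} (ha : 0 ≤ a) (hb : 0 ≤ b)
    (hρ : 0 ≤ ρ) (hα0 : α 0 = 0) (hα : ∀ i, α (i + 1) = a * (ρ ^ i * factWeight i))
    (hβ : ∀ j, β j = b * (ρ ^ (j + 1) * factWeight (j + 1))) :
    ∑ p ∈ antidiagonal k, (k.choose p.1 : ℝ) * (α p.1 * β p.2) ≤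
      8 * k * (a * b * (ρ ^ k * factWeight k)) := by
  rcases k with - | k
  · simp [hα0]
  have hconv := sum_choose_mul_factWeight_le (k + 1)
  rw [Finset.Nat.sum_antidiagonal_succ'] at hconv
  have hlast : 0 ≤ ((k + 1).choose (k + 1) : ℝ) * (factWeight (k + 1) * factWeight 0) := by
    have := factWeight_pos (k + 1)
    have := factWeight_pos 0
    positivity
  rw [Finset.Nat.sum_antidiagonal_succ, hα0, zero_mul, mul_zero, zero_add]
  calc ∑ p ∈ antidiagonal k, ((k + 1).choose (p.1 + 1) : ℝ) * (α (p.1 + 1) * β p.2)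
      ≤ ∑ p ∈ antidiagonal k, a * b * ρ ^ (k + 1) * ((k + 1) *
          (((k + 1).choose p.1 : ℝ) * (factWeight p.1 * factWeight (p.2 + 1)))) := by
        refine Finset.sum_le_sum fun p hp => ?_
        obtain rfl := mem_antidiagonal.1 hp
        have hterm := mul_le_mul_of_nonneg_left
          (choose_succ_mul_factWeight_le (a := p.1) (b := p.2))
          (by positivity : 0 ≤ a * b * ρ ^ (p.1 + p.2 + 1))
        push_cast
        refine le_trans (le_of_eq ?_) hterm
        rw [hα, hβ]
        ring
    _ ≤ a * b * ρ ^ (k + 1) * ((k + 1) * (8 * factWeight (k + 1))) := by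
        rw [← Finset.mul_sum, ← Finset.mul_sum]
        gcongr
        linarith
    _ = _ := by
        push_cast
        ring

/-! ### Jet bounds -/

/-- The derivatives of `f` at `x` of order at most `k` are dominated by `P` times `jetWeight`. -/
def HasJetBound (k : ℕ) (τ ρ P : ℝ) (x : Pt n) (f : Pt n → ℝ) : Prop :=
  ∀ J : List (Fin n), J.length ≤ k → |iterPd J f x| ≤ P * jetWeight k τ ρ J.length

namespace HasJetBound
variable {P Q : ℝ}

theorem mono (hτ : 1 ≤ τ) (hρ : 0 ≤ ρ) (hPQ : P ≤ Q) (h : HasJetBound k τ ρ P x f) :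
    HasJetBound k τ ρ Q x f := fun J hJ =>
  (h J hJ).trans (mul_le_mul_of_nonneg_right hPQ (jetWeight_nonneg hτ hρ _))

theorem const (hk : 1 ≤ k) (hτ : 1 ≤ τ) (hρ : 0 ≤ ρ) (c : ℝ) :
    HasJetBound k τ ρ |c| x (fun _ => c) := by
  intro J _
  rcases eq_or_ne J [] with rfl | hJ
  · rw [List.length_nil, jetWeight_of_ne (by omega), factWeight_zero, pow_zero, mul_one, mul_one,
      iterPd]
  · rw [iterPd_const c hJ, Pi.zero_apply, abs_zero]
    exact mul_nonneg (abs_nonneg c) (jetWeight_nonneg hτ hρ _)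

theorem add (hf : ContDiff ℝ ∞ f) (hg : ContDiff ℝ ∞ g) (h₁ : HasJetBound k τ ρ P x f)
    (h₂ : HasJetBound k τ ρ Q x g) : HasJetBound k τ ρ (P + Q) x (f + g) := by
  intro J hJ
  rw [iterPd_add hf hg, add_mul]
  exact (abs_add_le _ _).trans (add_le_add (h₁ J hJ) (h₂ J hJ))

theorem mul (hk : 1 ≤ k) (hτ : 1 ≤ τ) (hρ : 0 ≤ ρ) (hP : 0 ≤ P) (hQ : 0 ≤ Q)
    (hf : ContDiff ℝ ∞ f) (hg : ContDiff ℝ ∞ g) (h₁ : HasJetBound k τ ρ P x f)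
    (h₂ : HasJetBound k τ ρ Q x g) : HasJetBound k τ ρ (8 * P * Q) x (f * g) := by
  intro J hJ
  calc |iterPd J (f * g) x|
      ≤ ∑ p ∈ antidiagonal J.length, (J.length.choose p.1 : ℝ) *
          (P * jetWeight k τ ρ p.1 * (Q * jetWeight k τ ρ p.2)) :=
        abs_iterPd_mul_le hf hg (α := fun j => P * jetWeight k τ ρ j)
          (β := fun j => Q * jetWeight k τ ρ j) J (fun J' hJ' => h₁ J' (hJ'.trans hJ))
          fun J' hJ' => h₂ J' (hJ'.trans hJ)
    _ = P * Q * ∑ p ∈ antidiagonal J.length, (J.length.choose p.1 : ℝ) *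
          (jetWeight k τ ρ p.1 * jetWeight k τ ρ p.2) := by
        rw [Finset.mul_sum]
        exact Finset.sum_congr rfl fun p _ => by ring
    _ ≤ P * Q * (8 * jetWeight k τ ρ J.length) :=
        mul_le_mul_of_nonneg_left (sum_choose_mul_jetWeight_le hk hτ hρ hJ) (mul_nonneg hP hQ)
    _ = 8 * P * Q * jetWeight k τ ρ J.length := by ring

end HasJetBound

theorem contDiff_of_mem_adjoin {S : Set (Pt n → ℝ)} (hS : ∀ s ∈ S, ContDiff ℝ ∞ s)
    (hf : f ∈ Algebra.adjoin ℝ S) : ContDiff ℝ ∞ f := by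
  induction hf using Algebra.adjoin_induction with
  | mem s hs => exact hS s hs
  | algebraMap c => exact contDiff_const
  | add f g _ _ hf hg => exact hf.add hg
  | mul f g _ _ hf hg => exact hf.mul hg

theorem exists_hasJetBound_of_mem_adjoin {S : Set (Pt n → ℝ)} (hS : ∀ s ∈ S, ContDiff ℝ ∞ s)
    {M : ℝ} (hM : 0 ≤ M) (hf : f ∈ Algebra.adjoin ℝ S) :
    ∃ P : ℝ, 0 ≤ P ∧ ∀ (k : ℕ) (τ ρ : ℝ) (x : Pt n), 1 ≤ k → 1 ≤ τ → 0 ≤ ρ →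
      (∀ s ∈ S, HasJetBound k τ ρ M x s) → HasJetBound k τ ρ P x f := by
  induction hf using Algebra.adjoin_induction with
  | mem s hs => exact ⟨M, hM, fun k τ ρ x _ _ _ h => h s hs⟩
  | algebraMap c =>
    exact ⟨|c|, abs_nonneg c, fun k τ ρ x hk hτ hρ _ => .const hk hτ hρ c⟩
  | add f g hf hg ihf ihg =>
    obtain ⟨P, hP, hfP⟩ := ihf
    obtain ⟨Q, hQ, hgQ⟩ := ihg
    exact ⟨P + Q, by positivity, fun k τ ρ x hk hτ hρ h =>
      .add (contDiff_of_mem_adjoin hS hf) (contDiff_of_mem_adjoin hS hg)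
        (hfP k τ ρ x hk hτ hρ h) (hgQ k τ ρ x hk hτ hρ h)⟩
  | mul f g hf hg ihf ihg =>
    obtain ⟨P, hP, hfP⟩ := ihf
    obtain ⟨Q, hQ, hgQ⟩ := ihg
    exact ⟨8 * P * Q, by positivity, fun k τ ρ x hk hτ hρ h =>
      .mul hk hτ hρ hP hQ (contDiff_of_mem_adjoin hS hf) (contDiff_of_mem_adjoin hS hg)
        (hfP k τ ρ x hk hτ hρ h) (hgQ k τ ρ x hk hτ hρ h)⟩

end

end

section
open scoped ContDiff

variable {n : ℕ} {ι : Type*} {w : ι → Pt n → ℝ} {idx : Fin n → Fin n → ι}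

/-! ### Quasilinear elliptic systems -/

/-- The 1-jets of a family of functions: its members and their first partial derivatives. -/
def firstJets (w : ι → Pt n → ℝ) : Set (Pt n → ℝ) :=
  Set.range w ∪ Set.range fun p : Fin n × ι => pd p.1 (w p.2)

/-- The coefficient matrix `a^{rs}(w)` of a quasilinear system, each of whose entries is one of the
unknowns: `idx r s` is the index of the unknown `a^{rs}`. -/
def coeffMat (w : ι → Pt n → ℝ) (idx : Fin n → Fin n → ι) (x : Pt n) : Matrix (Fin n) (Fin n) ℝ :=
  Matrix.of fun r s => w (idx r s) x

/-- The functions `w A` solve on `U` the quasilinear system `a^{rs}(w) ∂_r ∂_s (w A) = f A`, where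
the principal part is the same scalar elliptic operator in each equation and each right side is a
polynomial in the 1-jets of the unknowns. -/
structure IsQuasilinearSolution (w : ι → Pt n → ℝ) (idx : Fin n → Fin n → ι) (f : ι → Pt n → ℝ)
    (U : Set (Pt n)) : Prop where
  contDiff : ∀ A, ContDiff ℝ ∞ (w A)
  isOpen : IsOpen U
  posDef : ∀ x ∈ U, (coeffMat w idx x).PosDef
  mem_adjoin : ∀ A, f A ∈ Algebra.adjoin ℝ (firstJets w)
  trace_eq : ∀ A, ∀ x ∈ U, (coeffMat w idx x * hessMat (w A) x).trace = f A x

theorem contDiff_of_mem_firstJets (hw : ∀ A, ContDiff ℝ ∞ (w A)) {f : Pt n → ℝ}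
    (hf : f ∈ firstJets w) : ContDiff ℝ ∞ f := by
  rcases hf with ⟨A, rfl⟩ | ⟨⟨i, A⟩, rfl⟩
  · exact hw A
  · exact contDiff_pd (hw A) i

/-- The inductive hypothesis of the growth argument: the functions `w A` are bounded by `M` at `y`
and their derivatives of order `j + 1`, for `j ≤ k`, by `M` times `jetWeight k τ ρ j`. -/
structure HasFirstJetBound (w : ι → Pt n → ℝ) (k : ℕ) (τ ρ M : ℝ) (y : Pt n) : Prop where
  abs_le : ∀ A, |w A y| ≤ M
  hasJetBound_pd : ∀ A i, HasJetBound k τ ρ M y (pd i (w A))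

namespace HasFirstJetBound
variable {k : ℕ} {τ ρ M P : ℝ} {y : Pt n}

theorem hasJetBound_apply (hτ : 1 ≤ τ) (hρ : 1 ≤ ρ) (hM : 0 ≤ M)
    (h : HasFirstJetBound w k τ ρ M y) (A : ι) : HasJetBound k τ ρ (4 * M) y (w A) := by
  intro J hJ
  have hρ0 : 0 ≤ ρ := zero_le_one.trans hρ
  rcases J with - | ⟨i, J⟩
  · have hweight := le_jetWeight (k := k) hτ hρ0 0
    rw [pow_zero, factWeight_zero, mul_one] at hweight
    calc |iterPd [] (w A) y| ≤ M := h.abs_le A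
      _ ≤ 4 * M * 1 := by linarith
      _ ≤ 4 * M * jetWeight k τ ρ 0 := by gcongr
  · rw [List.length_cons] at hJ ⊢
    have hjet := h.hasJetBound_pd A i J (by omega)
    rw [jetWeight_of_ne (by omega)] at hjet
    have hpos := factWeight_pos J.length
    have hratio : factWeight J.length ≤ 4 * factWeight (J.length + 1) := by
      have : 0 ≤ (J.length : ℝ) * factWeight J.length := by positivity
      linarith [add_two_mul_factWeight_le J.length]
    calc |iterPd (i :: J) (w A) y| ≤ M * (ρ ^ J.length * factWeight J.length) := hjet
      _ ≤ M * (ρ ^ (J.length + 1) * (4 * factWeight (J.length + 1))) := by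
          gcongr
          exact Nat.le_succ _
      _ = 4 * M * (ρ ^ (J.length + 1) * factWeight (J.length + 1)) := by ring
      _ ≤ 4 * M * jetWeight k τ ρ (J.length + 1) := by
          gcongr
          exact le_jetWeight hτ hρ0 _

theorem hasJetBound_of_mem_firstJets (hτ : 1 ≤ τ) (hρ : 1 ≤ ρ) (hM : 0 ≤ M)
    (h : HasFirstJetBound w k τ ρ M y) {f : Pt n → ℝ} (hf : f ∈ firstJets w) :
    HasJetBound k τ ρ (4 * M) y f := by
  rcases hf with ⟨A, rfl⟩ | ⟨⟨i, A⟩, rfl⟩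
  · exact h.hasJetBound_apply hτ hρ hM A
  · exact (h.hasJetBound_pd A i).mono hτ (zero_le_one.trans hρ) (by linarith)

theorem abs_iterPd_mul_sub_le (hw : ∀ A, ContDiff ℝ ∞ (w A)) (hτ : 1 ≤ τ) (hρ : 0 ≤ ρ)
    (hM : 0 ≤ M) {J : List (Fin n)} (h : HasFirstJetBound w J.length τ ρ M y) (A B : ι)
    (r s : Fin n) :
    |iterPd J (w B * pd r (pd s (w A))) y -
        w B y * iterPd J (pd r (pd s (w A))) y| ≤
      8 * J.length * (M * (τ * M) * (ρ ^ J.length * factWeight J.length)) := by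
  let α : ℕ → ℝ := fun
    | 0 => 0
    | i + 1 => M * (ρ ^ i * factWeight i)
  let β : ℕ → ℝ := fun j => τ * M * (ρ ^ (j + 1) * factWeight (j + 1))
  refine (abs_iterPd_mul_sub_mul_le (α := α) (β := β) (hw B)
    (contDiff_pd (contDiff_pd (hw A) s) r) J rfl (fun i J' hJ' => ?_) fun J' hJ' => ?_).trans
    (sum_choose_mul_le_of_apply_zero_eq_zero hM (by positivity) hρ rfl (fun _ => rfl) fun _ => rfl)
  · have hjet := h.hasJetBound_pd B i J' hJ'.le
    rwa [jetWeight_of_ne hJ'.ne] at hjet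
  · calc |iterPd (r :: J') (pd s (w A)) y|
        ≤ M * jetWeight J.length τ ρ (J'.length + 1) := h.hasJetBound_pd A s (r :: J') hJ'
      _ ≤ M * (τ * (ρ ^ (J'.length + 1) * factWeight (J'.length + 1))) := by
          gcongr
          exact jetWeight_le hτ hρ _
      _ = β J'.length := by ring

end HasFirstJetBound

theorem trace_coeffMat_mul_hessMat (w : ι → Pt n → ℝ) (idx : Fin n → Fin n → ι) (v : Pt n → ℝ)
    (x : Pt n) : (coeffMat w idx x * hessMat v x).trace =
      ∑ r, ∑ s, w (idx r s) x * pd s (pd r v) x := rfl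

theorem iterPd_pd_pd {v : Pt n → ℝ} (hv : ContDiff ℝ ∞ v) (J : List (Fin n)) (r s : Fin n) :
    pd r (pd s (iterPd J v)) = iterPd J (pd r (pd s v)) := by
  rw [pd_iterPd hv, pd_iterPd (contDiff_pd hv s)]

namespace IsQuasilinearSolution
variable {f : ι → Pt n → ℝ} {U : Set (Pt n)}

theorem iterPd_rhs (h : IsQuasilinearSolution w idx f U) {y : Pt n} (hy : y ∈ U) (A : ι)
    (J : List (Fin n)) :
    iterPd J (f A) y = ∑ r, ∑ s, iterPd J (w (idx r s) * pd s (pd r (w A))) y := by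
  have hsmooth : ∀ r s, ContDiff ℝ ∞ (w (idx r s) * pd s (pd r (w A))) := fun r s =>
    (h.contDiff _).mul (contDiff_pd (contDiff_pd (h.contDiff A) r) s)
  have hrhs : f A =ᶠ[nhds y] ∑ r, ∑ s, w (idx r s) * pd s (pd r (w A)) := by
    filter_upwards [h.isOpen.mem_nhds hy] with x hx
    rw [← h.trace_eq A x hx, trace_coeffMat_mul_hessMat]
    simp only [Finset.sum_apply, Pi.mul_apply]
  rw [iterPd_congr hrhs, iterPd_sum _ fun r => by
    simpa only [Finset.sum_fn] using ContDiff.sum fun s _ => hsmooth r s]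
  simp only [iterPd_sum _ (hsmooth _), Finset.sum_apply]

theorem trace_mul_hessMat_iterPd (h : IsQuasilinearSolution w idx f U) {y : Pt n} (hy : y ∈ U)
    (A : ι) (J : List (Fin n)) :
    (coeffMat w idx y * hessMat (iterPd J (w A)) y).trace = iterPd J (f A) y -
      ∑ r, ∑ s, (iterPd J (w (idx r s) * pd s (pd r (w A))) y -
        w (idx r s) y * iterPd J (pd s (pd r (w A))) y) := by
  simp only [trace_coeffMat_mul_hessMat, iterPd_pd_pd (h.contDiff A), h.iterPd_rhs hy,
    Finset.sum_sub_distrib, sub_sub_cancel]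

theorem abs_trace_mul_hessMat_iterPd_le (h : IsQuasilinearSolution w idx f U) {τ ρ M P : ℝ}
    {y : Pt n} (hy : y ∈ U) (hτ : 1 ≤ τ) (hρ : 0 ≤ ρ) (hM : 0 ≤ M) {J : List (Fin n)}
    (hwM : HasFirstJetBound w J.length τ ρ M y) (A : ι)
    (hfP : HasJetBound J.length τ ρ P y (f A)) :
    |(coeffMat w idx y * hessMat (iterPd J (w A)) y).trace| ≤
      τ * ((P + 8 * n ^ 2 * M ^ 2 * J.length) * (ρ ^ J.length * factWeight J.length)) := by
  have hrhs := hfP J le_rfl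
  rw [jetWeight_self] at hrhs
  have hcomm : |∑ r, ∑ s, (iterPd J (w (idx r s) * pd s (pd r (w A))) y -
      w (idx r s) y * iterPd J (pd s (pd r (w A))) y)| ≤ ∑ _r : Fin n, ∑ _s : Fin n,
        8 * J.length * (M * (τ * M) * (ρ ^ J.length * factWeight J.length)) := by
    refine (Finset.abs_sum_le_sum_abs _ _).trans (Finset.sum_le_sum fun r _ => ?_)
    refine (Finset.abs_sum_le_sum_abs _ _).trans (Finset.sum_le_sum fun s _ => ?_)
    exact hwM.abs_iterPd_mul_sub_le h.contDiff hτ hρ hM A _ s r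
  simp only [Finset.sum_const, Finset.card_univ, Fintype.card_fin, nsmul_eq_mul] at hcomm
  rw [h.trace_mul_hessMat_iterPd hy]
  exact (abs_sub _ _).trans ((add_le_add hrhs hcomm).trans_eq (by ring))

end IsQuasilinearSolution

end

section
open scoped MatrixOrder

variable {n : ℕ} {ι : Type*} {w : ι → Pt n → ℝ} {idx : Fin n → Fin n → ι} {f : ι → Pt n → ℝ}
  {U : Set (Pt n)} {x₀ x : Pt n} {R lam Θ K P M Q θ C : ℝ}

/-! ### Factorial growth of the derivatives -/

/-- Quantitative control of a quasilinear solution on the ball of radius `R` about `x₀`: bounds on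
the 1-jets, ellipticity, and the growth of the jets of the right sides in terms of the unknowns. -/
structure HasSystemBounds (w : ι → Pt n → ℝ) (idx : Fin n → Fin n → ι) (f : ι → Pt n → ℝ)
    (x₀ : Pt n) (R lam Θ K P M : ℝ) : Prop where
  radius_le_one : R ≤ 1
  one_le : 1 ≤ M
  abs_le : ∀ x ∈ euclBall x₀ R, ∀ A, |w A x| ≤ M
  abs_pd_le : ∀ x ∈ euclBall x₀ R, ∀ A i, |pd i (w A) x| ≤ M
  elliptic : IsUniformlyElliptic (coeffMat w idx) (euclBall x₀ R) lam Θ K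
  rhs_nonneg : 0 ≤ P
  rhs : ∀ A k τ ρ x, 1 ≤ k → 1 ≤ τ → 0 ≤ ρ →
    (∀ s ∈ firstJets w, HasJetBound k τ ρ (4 * M) x s) → HasJetBound k τ ρ P x (f A)

/-- The conditions under which one application of the gradient estimate, on a ball of radius `θ/k`
times the distance to the boundary, halves the excess of the `k`-th derivatives over the majorant
with `ρ = C / (R - ‖x - x₀‖)`. -/
structure IsGrowthScale (n : ℕ) (lam Θ K Q θ C : ℝ) : Prop where
  pos : 0 < θ
  le_half : θ ≤ 1 / 2
  lip_le : 4 * K * θ ≤ lam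
  dim_mul_lip_le : 12 * n * K * θ ≤ lam
  source_le : 4 / lam * (4 * θ * Q) ≤ 1 / 2
  one_le : 1 ≤ C
  slope_le : 4 / lam * (160 * Θ) ≤ 1 / 2 * (θ * C)

theorem exists_isGrowthScale (n : ℕ) (hlam : 0 < lam) (hΘ : 0 ≤ Θ) (hK : 0 ≤ K) (hQ : 0 ≤ Q) :
    ∃ θ C : ℝ, IsGrowthScale n lam Θ K Q θ C := by
  have hlip : 0 ≤ 4 * K / lam := by positivity
  have hdim : 0 ≤ 12 * n * K / lam := by positivity
  have hsource : 0 ≤ 4 / lam * (8 * Q) := by positivity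
  set D := 2 + 4 * K / lam + 12 * n * K / lam + 4 / lam * (8 * Q)
  have hDpos : 0 < D := by positivity
  have hle_inv {c : ℝ} (hc : c ≤ D) : c * (1 / D) ≤ 1 := by
    rwa [mul_one_div, div_le_one hDpos]
  refine ⟨1 / D, 1 + 4 / lam * (320 * Θ) * D, by positivity, ?_, ?_, ?_, ?_, ?_, ?_⟩
  · linarith [hle_inv (c := 2) (by linarith)]
  · have := hle_inv (c := 4 * K / lam) (by linarith)
    rwa [div_mul_eq_mul_div, div_le_one hlam] at this
  · have := hle_inv (c := 12 * n * K / lam) (by linarith)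
    rwa [div_mul_eq_mul_div, div_le_one hlam] at this
  · have := hle_inv (c := 4 / lam * (8 * Q)) (by linarith)
    linarith
  · exact le_add_of_nonneg_right (by positivity)
  · have hexpand : 1 / 2 * (1 / D * (1 + 4 / lam * (320 * Θ) * D)) =
        1 / 2 * (1 / D) + 4 / lam * (160 * Θ) := by
      field_simp
      ring
    rw [hexpand]
    exact le_add_of_nonneg_left (by positivity)

theorem div_pow_le_two_mul_div_pow {j N : ℕ} {d d' : ℝ} (hN : 0 < N) (hjN : j ≤ N) (hθ : 0 ≤ θ)
    (hθ2 : θ ≤ 1 / 2) (hd : 0 < d) (hC : 0 ≤ C) (hd' : d - θ * d / N ≤ d') :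
    (C / d') ^ j ≤ 2 * (C / d) ^ j := by
  have hNR : (0 : ℝ) < N := by exact_mod_cast hN
  have hjt : j * (θ / N) ≤ 1 / 2 :=
    calc j * (θ / N) ≤ N * (θ / N) := by gcongr
      _ = θ := mul_div_cancel₀ _ hNR.ne'
      _ ≤ 1 / 2 := hθ2
  have ht : θ / N ≤ 1 / 2 := (div_le_self hθ (by exact_mod_cast hN)).trans hθ2
  have hbernoulli : 1 / 2 ≤ (1 - θ / N) ^ j := by
    have := one_add_mul_le_pow (a := -(θ / N)) (by linarith) j
    rw [← sub_eq_add_neg] at this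
    linarith
  have hsplit : d - θ * d / N = d * (1 - θ / N) := by ring
  have hpos : 0 < d * (1 - θ / N) := mul_pos hd (by linarith)
  rw [hsplit] at hd'
  have hpow : d ^ j ≤ 2 * d' ^ j :=
    calc d ^ j = 2 * (d ^ j * (1 / 2)) := by ring
      _ ≤ 2 * (d ^ j * (1 - θ / N) ^ j) := by gcongr
      _ = 2 * (d * (1 - θ / N)) ^ j := by rw [mul_pow]
      _ ≤ 2 * d' ^ j := by gcongr
  have hd'pos : 0 < d' := hpos.trans_le hd'
  rw [div_pow, div_pow, ← mul_div_assoc, div_le_div_iff₀ (by positivity) (by positivity)]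
  calc C ^ j * d ^ j ≤ C ^ j * (2 * d' ^ j) := by gcongr
    _ = 2 * C ^ j * d' ^ j := by ring

namespace IsGrowthScale

theorem gradient_bound_le (h : IsGrowthScale n lam Θ K Q θ C) (hlam : 0 < lam) (hΘ : 0 ≤ Θ)
    (hM : 1 ≤ M) {m : ℕ} {τ d δ : ℝ} (hτ : 1 ≤ τ) (hd : 0 < d) (hd1 : d ≤ 1)
    (hδ : δ = θ * d / (m + 2)) :
    4 / lam * (2 * (δ * (2 * τ * (Q * (m + 2)) * ((C / d) ^ (m + 1) * factWeight (m + 1)))) +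
        10 * Θ * (2 * (M * ((C / d) ^ m * factWeight m)) / δ)) ≤
      (τ + 1) / 2 * (M * ((C / d) ^ (m + 1) * factWeight (m + 1))) := by
  have hθ := h.pos
  have hC : 0 < C := one_pos.trans_le h.one_le
  have hw := factWeight_pos (m + 1)
  set X := (C / d) ^ (m + 1) * factWeight (m + 1) with hX
  have hX0 : 0 ≤ X := by positivity
  have hXM : X ≤ M * X := le_mul_of_one_le_left hX0 hM
  have hsource : 4 / lam * (2 * (δ * (2 * τ * (Q * (m + 2)) * X))) ≤ τ / 2 * (M * X) :=
    calc 4 / lam * (2 * (δ * (2 * τ * (Q * (m + 2)) * X)))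
        = 4 / lam * (4 * θ * Q) * (d * (τ * X)) := by
          rw [hδ]
          field_simp
          ring
      _ ≤ 1 / 2 * (1 * (τ * (M * X))) := by
          have := h.source_le
          gcongr
      _ = τ / 2 * (M * X) := by ring
  have hslope : 4 / lam * (10 * Θ * (2 * (M * ((C / d) ^ m * factWeight m)) / δ)) ≤
      1 / 2 * (M * X) :=
    calc 4 / lam * (10 * Θ * (2 * (M * ((C / d) ^ m * factWeight m)) / δ))
        = 80 * Θ * M / (lam * θ * d) * (C / d) ^ m * ((m + 2) * factWeight m) := by
          rw [hδ]
          generalize (C / d) ^ m = q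
          field_simp
          ring
      _ ≤ 80 * Θ * M / (lam * θ * d) * (C / d) ^ m * (8 * factWeight (m + 1)) := by
          have := add_two_mul_factWeight_le m
          gcongr
      _ = 4 / lam * (160 * Θ) / (θ * C) * (M * X) := by
          rw [hX, pow_succ]
          generalize (C / d) ^ m = q
          field_simp
          ring
      _ ≤ 1 / 2 * (M * X) :=
          mul_le_mul_of_nonneg_right ((div_le_iff₀ (by positivity)).2 h.slope_le)
            (by positivity)
  rw [mul_add]
  linarith

end IsGrowthScale

theorem IsUniformlyElliptic.mono {a : Pt n → Matrix (Fin n) (Fin n) ℝ} {S T : Set (Pt n)}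
    (h : IsUniformlyElliptic a T lam Θ K) (hST : S ⊆ T) : IsUniformlyElliptic a S lam Θ K where
  lam_pos := h.lam_pos
  lam_le := h.lam_le
  lip_nonneg := h.lip_nonneg
  smul_one_le x hx := h.smul_one_le x (hST hx)
  trace_le x hx := h.trace_le x (hST hx)
  le_add_smul_one x hx y hy := h.le_add_smul_one x (hST hx) y (hST hy)

theorem HasFirstJetBound.abs_iterPd_le (hs : IsGrowthScale n lam Θ K Q θ C) (hM : 0 ≤ M) {m : ℕ}
    {τ d d' : ℝ} (hd : 0 < d) (hd' : d - θ * d / (m + 2 : ℕ) ≤ d')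
    (h : HasFirstJetBound w (m + 1) τ (C / d') M x) (A : ι) {J : List (Fin n)}
    (hJ : J.length = m + 1) :
    |iterPd J (w A) x| ≤ 2 * (M * ((C / d) ^ m * factWeight m)) := by
  obtain ⟨j, J, rfl⟩ := List.exists_cons_of_length_eq_add_one hJ
  obtain rfl : J.length = m := by simpa using hJ
  have hjet := h.hasJetBound_pd A j J (Nat.le_succ _)
  rw [jetWeight_of_ne (by omega)] at hjet
  have hpow := div_pow_le_two_mul_div_pow (j := J.length) (by omega) (by omega) hs.pos.le hs.le_half
    hd (zero_le_one.trans hs.one_le) hd'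
  have := factWeight_pos J.length
  calc |iterPd (j :: J) (w A) x| ≤ M * ((C / d') ^ J.length * factWeight J.length) := hjet
    _ ≤ M * (2 * (C / d) ^ J.length * factWeight J.length) := by gcongr
    _ = 2 * (M * ((C / d) ^ J.length * factWeight J.length)) := by ring

namespace HasSystemBounds

theorem abs_trace_le (hb : HasSystemBounds w idx f x₀ R lam Θ K P M)
    (hsol : IsQuasilinearSolution w idx f U) (hx : x ∈ U)
    (hs : IsGrowthScale n lam Θ K Q θ C) {m : ℕ} {τ d d' : ℝ} (hτ : 1 ≤ τ) (hd : 0 < d)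
    (hd' : d - θ * d / (m + 2 : ℕ) ≤ d') (hd'0 : 0 < d') (hd'1 : d' ≤ 1)
    (h : HasFirstJetBound w (m + 1) τ (C / d') M x) (A : ι) {J : List (Fin n)}
    (hJ : J.length = m + 1) :
    |(coeffMat w idx x * hessMat (iterPd J (w A)) x).trace| ≤
      2 * τ * ((P + 8 * n ^ 2 * M ^ 2) * (m + 2)) *
        ((C / d) ^ (m + 1) * factWeight (m + 1)) := by
  have hM : 0 ≤ M := zero_le_one.trans hb.one_le
  have hC : 0 ≤ C := zero_le_one.trans hs.one_le
  have hP := hb.rhs_nonneg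
  have hρ : 1 ≤ C / d' := (one_le_div hd'0).2 (hd'1.trans hs.one_le)
  have hρ0 : 0 ≤ C / d' := zero_le_one.trans hρ
  have hrhs : HasJetBound (m + 1) τ (C / d') P x (f A) :=
    hb.rhs A (m + 1) τ _ x (by omega) hτ hρ0 fun s => h.hasJetBound_of_mem_firstJets hτ hρ hM
  rw [← hJ] at h hrhs
  have hpow := div_pow_le_two_mul_div_pow (j := m + 1) (by omega) (by omega) hs.pos.le hs.le_half
    hd hC hd'
  have hcoeff : P + 8 * n ^ 2 * M ^ 2 * ((m + 1 : ℕ) : ℝ) ≤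
      (P + 8 * n ^ 2 * M ^ 2) * (m + 2) := by
    have : 0 ≤ P * m := by positivity
    have : 0 ≤ (n : ℝ) ^ 2 * M ^ 2 := by positivity
    push_cast
    linarith
  have := factWeight_pos (m + 1)
  have htrace := hsol.abs_trace_mul_hessMat_iterPd_le hx hτ hρ0 hM h A hrhs
  rw [hJ] at htrace
  calc |(coeffMat w idx x * hessMat (iterPd J (w A)) x).trace|
      ≤ τ * ((P + 8 * n ^ 2 * M ^ 2 * ((m + 1 : ℕ) : ℝ)) *
          ((C / d') ^ (m + 1) * factWeight (m + 1))) := htrace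
    _ ≤ τ * ((P + 8 * n ^ 2 * M ^ 2) * (m + 2) *
          (2 * (C / d) ^ (m + 1) * factWeight (m + 1))) := by gcongr
    _ = _ := by ring

theorem abs_pd_iterPd_le (hb : HasSystemBounds w idx f x₀ R lam Θ K P M)
    (hsol : IsQuasilinearSolution w idx f U) (hU : euclBall x₀ R ⊆ U)
    (hs : IsGrowthScale n lam Θ K (P + 8 * n ^ 2 * M ^ 2) θ C) {m : ℕ} {τ : ℝ} (hτ : 1 ≤ τ)
    (hwM : ∀ y, euclNorm (y - x₀) < R →
      HasFirstJetBound w (m + 1) τ (C / (R - euclNorm (y - x₀))) M y)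
    (hx : euclNorm (x - x₀) < R) (A : ι) {J : List (Fin n)} (hJ : J.length = m + 1) (i : Fin n) :
    |pd i (iterPd J (w A)) x| ≤ (τ + 1) / 2 *
      (M * ((C / (R - euclNorm (x - x₀))) ^ (m + 1) * factWeight (m + 1))) := by
  set d := R - euclNorm (x - x₀)
  have hd0 : 0 < d := sub_pos.2 hx
  have hle_one (y : Pt n) : R - euclNorm (y - x₀) ≤ 1 :=
    (sub_le_self _ (euclNorm_nonneg _)).trans hb.radius_le_one
  set δ := θ * d / (m + 2) with hδ
  have hθ := hs.pos
  have hδ0 : 0 < δ := by positivity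
  have hδd : δ ≤ θ * d := div_le_self (by positivity) (by linarith [m.cast_nonneg (α := ℝ)])
  have hδθ : δ ≤ θ := hδd.trans (mul_le_of_le_one_right hθ.le (hle_one x))
  have hθd : θ * d ≤ 1 / 2 * d := mul_le_mul_of_nonneg_right hs.le_half hd0.le
  have hdist : ∀ y ∈ euclBall x δ, d - δ ≤ R - euclNorm (y - x₀) := fun y hy => by
    have hyx : euclNorm (y - x) ≤ δ := hy
    linarith [euclNorm_sub_le y x x₀]
  have hball : ∀ y ∈ euclBall x δ, euclNorm (y - x₀) < R := fun y hy => by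
    linarith [hdist y hy]
  have hdist' : ∀ y ∈ euclBall x δ, d - θ * d / (m + 2 : ℕ) ≤ R - euclNorm (y - x₀) := by
    push_cast
    exact hdist
  have hM : 0 ≤ M := zero_le_one.trans hb.one_le
  have hell := hb.elliptic
  have hlam := hell.lam_pos
  have := hb.rhs_nonneg
  refine (abs_pd_le_of_isUniformlyElliptic (contDiff_iterPd (hsol.contDiff A) J) hδ0
    (hell.mono fun y hy => (hball y hy).le) ?_ ?_
    (fun y hy => (hwM y (hball y hy)).abs_iterPd_le hs hM hd0 (hdist' y hy) A hJ)
    (fun y hy => hb.abs_trace_le hsol (hU (hball y hy).le) hs hτ hd0 (hdist' y hy)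
      (sub_pos.2 (hball y hy)) (hle_one y) (hwM y (hball y hy)) A hJ) i).trans
    (hs.gradient_bound_le hlam (hlam.le.trans hell.lam_le) hb.one_le hτ hd0
      (hle_one x) hδ)
  · exact (mul_le_mul_of_nonneg_left hδθ (by linarith [hell.lip_nonneg])).trans hs.lip_le
  · exact (mul_le_mul_of_nonneg_left hδθ
      (mul_nonneg (by positivity) hell.lip_nonneg)).trans hs.dim_mul_lip_le

theorem hasFirstJetBound_halve (hb : HasSystemBounds w idx f x₀ R lam Θ K P M)
    (hsol : IsQuasilinearSolution w idx f U) (hU : euclBall x₀ R ⊆ U)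
    (hs : IsGrowthScale n lam Θ K (P + 8 * n ^ 2 * M ^ 2) θ C) {m : ℕ} {τ : ℝ} (hτ : 1 ≤ τ)
    (hwM : ∀ y, euclNorm (y - x₀) < R →
      HasFirstJetBound w (m + 1) τ (C / (R - euclNorm (y - x₀))) M y)
    (hx : euclNorm (x - x₀) < R) :
    HasFirstJetBound w (m + 1) ((τ + 1) / 2) (C / (R - euclNorm (x - x₀))) M x where
  abs_le := (hwM x hx).abs_le
  hasJetBound_pd A i J hJ := by
    rcases hJ.lt_or_eq with hlt | hJ
    · have hjet := (hwM x hx).hasJetBound_pd A i J hlt.le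
      rwa [jetWeight_of_ne hlt.ne] at hjet ⊢
    · rw [← pd_iterPd (hsol.contDiff A), hJ, jetWeight_self, mul_left_comm]
      exact hb.abs_pd_iterPd_le hsol hU hs hτ hwM hx A hJ i

end HasSystemBounds

theorem HasFirstJetBound.succ {k : ℕ} {ρ B : ℝ} (hM : 1 ≤ M) (hρ : 1 ≤ ρ)
    (hB : ∀ A, ∀ J : List (Fin n), J.length = k + 2 → |iterPd J (w A) x| ≤ B)
    (hB0 : 0 ≤ B) (h : HasFirstJetBound w k 1 ρ M x) :
    HasFirstJetBound w (k + 1) (1 + B / factWeight (k + 1)) ρ M x where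
  abs_le := h.abs_le
  hasJetBound_pd A i J hJ := by
    rcases hJ.lt_or_eq with hlt | hJ
    · have hjet := h.hasJetBound_pd A i J (by omega)
      rwa [jetWeight_of_ne hlt.ne, ← jetWeight_one k]
    · have hc := factWeight_pos (k + 1)
      have hpow : 1 ≤ M * ρ ^ (k + 1) := one_le_mul_of_one_le_of_one_le hM (one_le_pow₀ hρ)
      rw [hJ, jetWeight_self]
      calc |iterPd (i :: J) (w A) x| ≤ B := hB A (i :: J) (by simp [hJ])
        _ = 1 * (B / factWeight (k + 1) * factWeight (k + 1)) := by field_simp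
        _ ≤ M * ρ ^ (k + 1) * ((1 + B / factWeight (k + 1)) * factWeight (k + 1)) := by
            gcongr
            linarith
        _ = _ := by ring

theorem HasFirstJetBound.of_tendsto {k : ℕ} {ρ τ : ℝ} {T : ℕ → ℝ} (hT : Tendsto T atTop (nhds τ))
    (h : ∀ j, HasFirstJetBound w k (T j) ρ M x) : HasFirstJetBound w k τ ρ M x where
  abs_le := (h 0).abs_le
  hasJetBound_pd A i J hJ := by
    have hlim : Tendsto (fun j => M * jetWeight k (T j) ρ J.length) atTop
        (nhds (M * jetWeight k τ ρ J.length)) := by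
      unfold jetWeight
      split_ifs
      · exact (hT.mul_const _).const_mul M
      · exact tendsto_const_nhds
    exact ge_of_tendsto' hlim fun j => (h j).hasJetBound_pd A i J hJ

theorem HasSystemBounds.hasFirstJetBound [Finite ι]
    (hb : HasSystemBounds w idx f x₀ R lam Θ K P M) (hsol : IsQuasilinearSolution w idx f U)
    (hU : euclBall x₀ R ⊆ U) (hs : IsGrowthScale n lam Θ K (P + 8 * n ^ 2 * M ^ 2) θ C) (k : ℕ)
    (hx : euclNorm (x - x₀) < R) :
    HasFirstJetBound w k 1 (C / (R - euclNorm (x - x₀))) M x := by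
  induction k generalizing x with
  | zero =>
    refine ⟨hb.abs_le x hx.le, fun A i J hJ => ?_⟩
    obtain rfl : J = [] := by simpa using hJ
    simpa [iterPd, jetWeight, factWeight_zero] using hb.abs_pd_le x hx.le A i
  | succ k ih =>
    obtain ⟨B, hB0, hB⟩ := exists_abs_iterPd_le hsol.contDiff (isCompact_euclBall x₀ R) (k + 2)
    set c := B / factWeight (k + 1)
    have hc : 0 ≤ c := div_nonneg hB0 (factWeight_pos _).le
    have hiter : ∀ j : ℕ, ∀ y, euclNorm (y - x₀) < R → HasFirstJetBound w (k + 1)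
        (1 + c * (1 / 2) ^ j) (C / (R - euclNorm (y - x₀))) M y := by
      intro j
      induction j with
      | zero =>
        intro y hy
        rw [pow_zero, mul_one]
        have hd1 : R - euclNorm (y - x₀) ≤ 1 :=
          (sub_le_self _ (euclNorm_nonneg _)).trans hb.radius_le_one
        exact (ih hy).succ hb.one_le ((one_le_div (sub_pos.2 hy)).2 (hd1.trans hs.one_le))
          (hB y hy.le) hB0
      | succ j ihj =>
        intro y hy
        have hτ : 1 ≤ 1 + c * (1 / 2) ^ j := le_add_of_nonneg_right (by positivity)
        convert hb.hasFirstJetBound_halve hsol hU hs hτ ihj hy using 1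
        ring
    have hlim : Tendsto (fun j : ℕ => 1 + c * (1 / 2 : ℝ) ^ j) atTop (nhds 1) := by
      simpa using ((tendsto_pow_atTop_nhds_zero_of_lt_one (r := (1 / 2 : ℝ)) (by norm_num)
        (by norm_num)).const_mul c).const_add 1
    exact .of_tendsto hlim fun j => hiter j x hx

end

section
open scoped Matrix MatrixOrder

variable {n : ℕ} {ι : Type*} {x₀ : Pt n} {R : ℝ}

/-! ### Local bounds for quasilinear solutions -/

theorem le_smul_one_of_abs_le [Fintype ι] [DecidableEq ι] {D : Matrix ι ι ℝ} {b : ℝ}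
    (hsymm : D.IsSymm) (hb : 0 ≤ b) (hD : ∀ r s, |D r s| ≤ b) :
    D ≤ (Fintype.card ι * b) • 1 := by
  refine le_of_isSymm_of_dotProduct_mulVec_le hsymm (Matrix.isSymm_one.smul _) fun ζ => ?_
  have hcard := sq_sum_le_card_mul_sum_sq (s := Finset.univ) (f := fun r => |ζ r|)
  simp only [sq_abs, Finset.card_univ] at hcard
  calc ζ ⬝ᵥ D *ᵥ ζ = ∑ r, ∑ s, D r s * (ζ r * ζ s) := by
        simp only [dotProduct, Matrix.mulVec, Finset.mul_sum]
        exact Finset.sum_congr rfl fun r _ => Finset.sum_congr rfl fun s _ => by ring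
    _ ≤ ∑ r, ∑ s, b * (|ζ r| * |ζ s|) := by
        refine Finset.sum_le_sum fun r _ => Finset.sum_le_sum fun s _ => ?_
        rw [← abs_mul]
        exact (le_abs_self _).trans ((abs_mul _ _).trans_le
          (mul_le_mul_of_nonneg_right (hD r s) (abs_nonneg _)))
    _ = b * (∑ r, |ζ r|) ^ 2 := by
        rw [sq, Finset.sum_mul_sum]
        simp only [Finset.mul_sum]
    _ ≤ b * (Fintype.card ι * ∑ r, ζ r ^ 2) := mul_le_mul_of_nonneg_left hcard hb
    _ = ζ ⬝ᵥ ((Fintype.card ι * b) • 1 : Matrix ι ι ℝ) *ᵥ ζ := by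
        rw [Matrix.smul_mulVec, Matrix.one_mulVec, dotProduct_smul, smul_eq_mul, mul_comm _ b,
          mul_assoc]
        simp only [dotProduct, sq]

theorem exists_pos_smul_one_le {a : Pt n → Matrix (Fin n) (Fin n) ℝ} {S : Set (Pt n)}
    (hS : IsCompact S) (ha : Continuous a) (hpos : ∀ x ∈ S, (a x).PosDef) :
    ∃ lam : ℝ, 0 < lam ∧ ∀ x ∈ S, lam • 1 ≤ a x := by
  have hsphere : IsCompact {ζ : Pt n | euclNorm ζ = 1} := by
    refine (isCompact_euclBall 0 1).of_isClosed_subset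
      (isClosed_eq continuous_euclNorm continuous_const) fun ζ hζ => ?_
    simpa [euclBall] using hζ.le
  have hcont : Continuous fun p : Pt n × Pt n => p.2 ⬝ᵥ a p.1 *ᵥ p.2 := by fun_prop
  obtain ⟨lam, hlam, h⟩ := (hS.prod hsphere).exists_forall_le' hcont.continuousOn (a := 0) (by
    rintro ⟨x, ζ⟩ ⟨hx, hζ⟩
    refine (hpos x hx).dotProduct_mulVec_pos fun h0 => ?_
    subst h0
    simp [euclNorm_zero] at hζ)
  refine ⟨lam, hlam, fun x hx => le_of_isSymm_of_dotProduct_mulVec_le (Matrix.isSymm_one.smul _)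
    (hpos x hx).isHermitian fun ζ => ?_⟩
  rw [Matrix.smul_mulVec, Matrix.one_mulVec, dotProduct_smul, smul_eq_mul, ← euclNorm_sq]
  rcases eq_or_ne ζ 0 with rfl | hζ
  · simp [euclNorm_zero]
  have hnorm : 0 < euclNorm ζ :=
    (euclNorm_nonneg ζ).lt_of_ne fun h0 => hζ (euclNorm_eq_zero.1 h0.symm)
  have hunit : euclNorm ((euclNorm ζ)⁻¹ • ζ) = 1 := by
    rw [euclNorm_smul, abs_of_pos (inv_pos.2 hnorm), inv_mul_cancel₀ hnorm.ne']
  have hle := h (x, (euclNorm ζ)⁻¹ • ζ) ⟨hx, hunit⟩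
  simp only [Matrix.mulVec_smul, dotProduct_smul, smul_dotProduct, smul_eq_mul] at hle
  rwa [← mul_assoc, ← mul_inv, inv_mul_eq_div, le_div_iff₀ (by positivity), ← sq] at hle

theorem exists_abs_sub_le_mul_euclNorm [Finite ι] {w : ι → Pt n → ℝ}
    (hw : ∀ A, ContDiff ℝ 1 (w A)) (x₀ : Pt n) (R : ℝ) :
    ∃ B : ℝ, 0 ≤ B ∧ ∀ A, ∀ x ∈ euclBall x₀ R, ∀ y ∈ euclBall x₀ R,
      |w A y - w A x| ≤ B * euclNorm (x - y) := by
  have hbound : ∀ A, ∃ B : ℝ, ∀ x ∈ Metric.closedBall x₀ R, ‖fderiv ℝ (w A) x‖ ≤ B := fun A =>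
    (isCompact_closedBall x₀ R).exists_bound_of_continuousOn
      ((hw A).continuous_fderiv one_ne_zero).continuousOn
  choose B hB using hbound
  obtain ⟨C, hC⟩ := (Set.finite_range B).bddAbove
  have hmem : ∀ z ∈ euclBall x₀ R, z ∈ Metric.closedBall x₀ R := fun z hz =>
    mem_closedBall_iff_norm.2 ((norm_le_euclNorm _).trans hz)
  refine ⟨max C 0, le_max_right _ _, fun A x hx y hy => ?_⟩
  have hlip : ‖w A y - w A x‖ ≤ max C 0 * ‖y - x‖ :=
    (convex_closedBall x₀ R).norm_image_sub_le_of_norm_fderiv_le (𝕜 := ℝ)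
      (fun z _ => ((hw A).differentiable one_ne_zero) z)
      (fun z hz => (hB A z hz).trans ((hC ⟨A, rfl⟩).trans (le_max_left _ _))) (hmem x hx)
      (hmem y hy)
  rw [euclNorm_sub_comm]
  exact hlip.trans (mul_le_mul_of_nonneg_left (norm_le_euclNorm _) (le_max_right _ _))

theorem exists_isUniformlyElliptic {a : Pt n → Matrix (Fin n) (Fin n) ℝ}
    (ha : ∀ r s, ContDiff ℝ 1 fun x => a x r s) (hpos : ∀ x ∈ euclBall x₀ R, (a x).PosDef) :
    ∃ lam Θ K : ℝ, IsUniformlyElliptic a (euclBall x₀ R) lam Θ K := by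
  have hcont : Continuous a := continuous_matrix fun r s => (ha r s).continuous
  obtain ⟨lam, hlam, hlam_le⟩ := exists_pos_smul_one_le (isCompact_euclBall x₀ R) hcont hpos
  obtain ⟨T, hT⟩ := (isCompact_euclBall x₀ R).exists_bound_of_continuousOn
    (f := fun x => (a x).trace) hcont.matrix_trace.continuousOn
  obtain ⟨B, hB0, hB⟩ := exists_abs_sub_le_mul_euclNorm
    (w := fun p : Fin n × Fin n => fun x => a x p.1 p.2) (fun p => ha p.1 p.2) x₀ R
  refine ⟨lam, max lam T, n * B, hlam, le_max_left _ _, by positivity, hlam_le,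
    fun x hx => (le_abs_self _).trans ((hT x hx).trans (le_max_right _ _)), fun x hx y hy => ?_⟩
  have hsymm : (a y - a x).IsSymm := (hpos y hy).isHermitian.sub (hpos x hx).isHermitian
  rw [← sub_le_iff_le_add', mul_assoc]
  simpa using le_smul_one_of_abs_le hsymm (mul_nonneg hB0 (euclNorm_nonneg _))
    fun r s => hB (r, s) x hx y hy

theorem exists_euclBall_subset {U : Set (Pt n)} (hU : IsOpen U) (hx₀ : x₀ ∈ U) :
    ∃ R : ℝ, 0 < R ∧ R ≤ 1 ∧ euclBall x₀ R ⊆ U := by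
  obtain ⟨ε, hε, hεU⟩ := Metric.isOpen_iff.1 hU x₀ hx₀
  refine ⟨min 1 (ε / 2), by positivity, min_le_left _ _, fun x hx => hεU ?_⟩
  have hx' : euclNorm (x - x₀) ≤ min 1 (ε / 2) := hx
  rw [mem_ball_iff_norm]
  calc ‖x - x₀‖ ≤ ε / 2 := (norm_le_euclNorm _).trans (hx'.trans (min_le_right _ _))
    _ < ε := half_lt_self hε

namespace IsQuasilinearSolution
variable {w f : ι → Pt n → ℝ} {idx : Fin n → Fin n → ι} {U : Set (Pt n)}

theorem exists_hasSystemBounds [Finite ι] (h : IsQuasilinearSolution w idx f U) (hR : R ≤ 1)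
    (hRU : euclBall x₀ R ⊆ U) :
    ∃ lam Θ K P M : ℝ, HasSystemBounds w idx f x₀ R lam Θ K P M := by
  cases nonempty_fintype ι
  obtain ⟨lam, Θ, K, hell⟩ := exists_isUniformlyElliptic (a := coeffMat w idx)
    (fun r s => (h.contDiff (idx r s)).of_le (by simp)) fun x hx => h.posDef x (hRU hx)
  obtain ⟨M₀, hM₀, hM₀w⟩ := exists_abs_iterPd_le h.contDiff (isCompact_euclBall x₀ R) 0
  obtain ⟨M₁, hM₁, hM₁w⟩ := exists_abs_iterPd_le h.contDiff (isCompact_euclBall x₀ R) 1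
  set M := 1 + M₀ + M₁
  have hrhs := fun A => exists_hasJetBound_of_mem_adjoin
    (fun s => contDiff_of_mem_firstJets h.contDiff) (by positivity : 0 ≤ 4 * M) (h.mem_adjoin A)
  choose P hP hPf using hrhs
  refine ⟨lam, Θ, K, ∑ A, P A, M, hR, by linarith, fun x hx A => ?_, fun x hx A i => ?_, hell,
    Finset.sum_nonneg fun A _ => hP A, fun A k τ ρ x hk hτ hρ hjet => ?_⟩
  · have : |w A x| ≤ M₀ := hM₀w x hx A [] rfl
    linarith
  · have : |pd i (w A) x| ≤ M₁ := hM₁w x hx A [i] rfl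
    linarith
  · exact (hPf A k τ ρ x hk hτ hρ hjet).mono hτ hρ
      (Finset.single_le_sum (fun A _ => hP A) (Finset.mem_univ A))

theorem exists_hasFirstJetBound [Finite ι] (h : IsQuasilinearSolution w idx f U) (hx₀ : x₀ ∈ U) :
    ∃ R M C : ℝ, 0 < R ∧ 0 ≤ M ∧ 0 ≤ C ∧ ∀ k x, euclNorm (x - x₀) < R →
      HasFirstJetBound w k 1 (C / (R - euclNorm (x - x₀))) M x := by
  obtain ⟨R, hR, hR1, hRU⟩ := exists_euclBall_subset h.isOpen hx₀
  obtain ⟨lam, Θ, K, P, M, hb⟩ := h.exists_hasSystemBounds hR1 hRU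
  have hlam := hb.elliptic.lam_pos
  have hP := hb.rhs_nonneg
  obtain ⟨θ, C, hs⟩ := exists_isGrowthScale n hlam (hlam.le.trans hb.elliptic.lam_le)
    hb.elliptic.lip_nonneg (by positivity : 0 ≤ P + 8 * n ^ 2 * M ^ 2)
  exact ⟨R, M, C, hR, zero_le_one.trans hb.one_le, zero_le_one.trans hs.one_le,
    fun k x hx => hb.hasFirstJetBound h hRU hs k hx⟩

end IsQuasilinearSolution

end

section
open scoped ContDiff Nat

/-! ### Analyticity from factorial bounds -/

section
variable {E F : Type*} [NormedAddCommGroup E] [NormedSpace ℝ E] [NormedAddCommGroup F]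
  [NormedSpace ℝ F] [CompleteSpace F] {f : E → F} {x₀ h : E} {r C q : ℝ}

theorem norm_sub_sum_iteratedFDeriv_le (hf : ContDiff ℝ ∞ f) {B : ℝ} (k : ℕ)
    (hB : ∀ t ∈ Set.Icc (0 : ℝ) 1, ‖iteratedFDeriv ℝ (k + 1) f (x₀ + t • h)‖ ≤ B) :
    ‖f (x₀ + h) - ∑ i ∈ Finset.range (k + 1), (i ! : ℝ)⁻¹ • iteratedFDeriv ℝ i f x₀ fun _ => h‖ ≤
      (k ! : ℝ)⁻¹ * (B * ‖h‖ ^ (k + 1)) := by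
  have hint : ‖∫ t in (0 : ℝ)..1, (1 - t) ^ k • iteratedFDeriv ℝ (k + 1) f (x₀ + t • h) fun _ => h‖
      ≤ B * ‖h‖ ^ (k + 1) * |1 - 0| := by
    refine intervalIntegral.norm_integral_le_of_norm_le_const fun t ht => ?_
    rw [Set.uIoc_of_le zero_le_one] at ht
    have hpow : ‖(1 - t) ^ k‖ ≤ 1 := by
      rw [norm_pow, Real.norm_of_nonneg (sub_nonneg.2 ht.2)]
      exact pow_le_one₀ (sub_nonneg.2 ht.2) (by linarith [ht.1])
    calc ‖(1 - t) ^ k • iteratedFDeriv ℝ (k + 1) f (x₀ + t • h) fun _ => h‖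
        ≤ 1 * ‖iteratedFDeriv ℝ (k + 1) f (x₀ + t • h) fun _ => h‖ := by
          rw [norm_smul]
          gcongr
      _ ≤ ‖iteratedFDeriv ℝ (k + 1) f (x₀ + t • h)‖ * ‖h‖ ^ (k + 1) := by
          simpa using (iteratedFDeriv ℝ (k + 1) f (x₀ + t • h)).le_opNorm fun _ => h
      _ ≤ B * ‖h‖ ^ (k + 1) := by
          gcongr
          exact hB t ⟨ht.1.le, ht.2⟩
  rw [map_add_eq_sum_add_integral_iteratedFDeriv (n := k) fun t _ =>
    hf.contDiffAt.of_le (by exact_mod_cast le_top), add_sub_cancel_left, norm_smul, norm_inv,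
    Real.norm_natCast]
  gcongr
  simpa using hint

theorem hasSum_iteratedFDeriv (hf : ContDiff ℝ ∞ f) (hC : 0 ≤ C) (hq : 0 ≤ q)
    (hb : ∀ k, ∀ y ∈ Metric.ball x₀ r, ‖iteratedFDeriv ℝ k f y‖ ≤ C * q ^ k * k !)
    (hhr : ‖h‖ < r) (hqh : q * ‖h‖ ≤ 1 / 2) :
    HasSum (fun k => (k ! : ℝ)⁻¹ • iteratedFDeriv ℝ k f x₀ fun _ => h) (f (x₀ + h)) := by
  have hsegment : ∀ t ∈ Set.Icc (0 : ℝ) 1, x₀ + t • h ∈ Metric.ball x₀ r := fun t ht => by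
    rw [mem_ball_iff_norm, add_sub_cancel_left, norm_smul, Real.norm_of_nonneg ht.1]
    exact (mul_le_of_le_one_left (norm_nonneg h) ht.2).trans_lt hhr
  have hterm : ∀ k, ‖(k ! : ℝ)⁻¹ • iteratedFDeriv ℝ k f x₀ fun _ => h‖ ≤ C * (1 / 2) ^ k := by
    intro k
    rw [norm_smul, norm_inv, Real.norm_natCast, inv_mul_le_iff₀ (by positivity)]
    calc ‖iteratedFDeriv ℝ k f x₀ fun _ => h‖ ≤ ‖iteratedFDeriv ℝ k f x₀‖ * ‖h‖ ^ k := by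
          simpa using (iteratedFDeriv ℝ k f x₀).le_opNorm fun _ => h
      _ ≤ C * q ^ k * k ! * ‖h‖ ^ k := by
          gcongr
          exact hb k x₀ (Metric.mem_ball_self ((norm_nonneg h).trans_lt hhr))
      _ = k ! * (C * (q * ‖h‖) ^ k) := by ring
      _ ≤ k ! * (C * (1 / 2) ^ k) := by gcongr
  have hsummable : Summable fun k => ‖(k ! : ℝ)⁻¹ • iteratedFDeriv ℝ k f x₀ fun _ => h‖ :=
    .of_nonneg_of_le (fun _ => norm_nonneg _) hterm (summable_geometric_two.mul_left C)
  rw [hasSum_iff_tendsto_nat_of_summable_norm hsummable, ← tendsto_add_atTop_iff_nat 1,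
    tendsto_iff_norm_sub_tendsto_zero]
  have hlim : Tendsto (fun k : ℕ => C * (((k + 1 : ℕ) : ℝ) * (1 / 2) ^ (k + 1))) atTop
      (nhds 0) := by
    simpa using ((tendsto_self_mul_const_pow_of_lt_one (r := (1 / 2 : ℝ)) (by norm_num)
      (by norm_num)).comp (tendsto_add_atTop_nat 1)).const_mul C
  refine squeeze_zero (fun _ => norm_nonneg _) (fun k => ?_) hlim
  rw [norm_sub_rev]
  calc _ ≤ (k ! : ℝ)⁻¹ * (C * q ^ (k + 1) * (k + 1)! * ‖h‖ ^ (k + 1)) :=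
        norm_sub_sum_iteratedFDeriv_le hf k fun t ht => hb (k + 1) _ (hsegment t ht)
    _ = C * ((k + 1 : ℕ) * (q * ‖h‖) ^ (k + 1)) := by
        rw [Nat.factorial_succ]
        push_cast
        field_simp
        ring
    _ ≤ C * ((k + 1 : ℕ) * (1 / 2) ^ (k + 1)) := by gcongr

theorem analyticAt_of_norm_iteratedFDeriv_le (hf : ContDiff ℝ ∞ f) (hr : 0 < r) (hC : 0 ≤ C)
    (hq : 0 < q) (hb : ∀ k, ∀ y ∈ Metric.ball x₀ r, ‖iteratedFDeriv ℝ k f y‖ ≤ C * q ^ k * k !) :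
    AnalyticAt ℝ f x₀ := by
  set δ : ℝ := min r (1 / (2 * q))
  have hδ0 : 0 < δ := by positivity
  have hδq : q * δ ≤ 1 / 2 :=
    calc q * δ ≤ q * (1 / (2 * q)) := by
          gcongr
          exact min_le_right _ _
      _ = 1 / 2 := by field_simp
  let p : FormalMultilinearSeries ℝ E F := fun k => (k ! : ℝ)⁻¹ • iteratedFDeriv ℝ k f x₀
  refine ⟨p, ENNReal.ofReal δ, ?_, by simpa using hδ0, fun {h} hh => ?_⟩
  · refine p.le_radius_of_bound (r := Real.toNNReal δ) C fun k => ?_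
    rw [Real.coe_toNNReal _ hδ0.le, norm_smul, norm_inv, Real.norm_natCast, mul_assoc,
      inv_mul_le_iff₀ (by positivity)]
    calc ‖iteratedFDeriv ℝ k f x₀‖ * δ ^ k ≤ C * q ^ k * k ! * δ ^ k := by
          gcongr
          exact hb k x₀ (Metric.mem_ball_self hr)
      _ = k ! * (C * (q * δ) ^ k) := by ring
      _ ≤ k ! * (C * 1) := by
          gcongr
          exact pow_le_one₀ (by positivity) (by linarith)
      _ = k ! * C := by rw [mul_one]
  · have hhδ : ‖h‖ < δ := by simpa [Metric.eball_ofReal] using hh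
    exact hasSum_iteratedFDeriv hf hC hq.le hb (hhδ.trans_le (min_le_left _ _))
      ((by gcongr : q * ‖h‖ ≤ q * δ).trans hδq)

end

variable {n : ℕ} {f : Pt n → ℝ} {ι : Type*}

theorem iteratedFDeriv_succ_apply_eq_sum (hf : ContDiff ℝ ∞ f) (k : ℕ) (y : Pt n)
    (m : Fin (k + 1) → Pt n) :
    iteratedFDeriv ℝ (k + 1) f y m =
      ∑ r, m (Fin.last k) r * iteratedFDeriv ℝ k (pd r f) y (Fin.init m) := by
  have hderiv : ContDiff ℝ k (fderiv ℝ f) :=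
    (hf.fderiv_right (m := ∞) (by simp)).of_le (by exact_mod_cast le_top)
  have happly (v : Pt n) : iteratedFDeriv ℝ k (fderiv ℝ f) y (Fin.init m) v =
      iteratedFDeriv ℝ k (fun y => fderiv ℝ f y v) y (Fin.init m) :=
    (congrArg (fun L => L (Fin.init m)) ((ContinuousLinearMap.apply ℝ ℝ v).iteratedFDeriv_comp_left
      (x := y) hderiv.contDiffAt le_rfl)).symm
  rw [iteratedFDeriv_succ_apply_right]
  calc iteratedFDeriv ℝ k (fderiv ℝ f) y (Fin.init m) (m (Fin.last k))
      = iteratedFDeriv ℝ k (fderiv ℝ f) y (Fin.init m)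
          (∑ r, m (Fin.last k) r • (Pi.single r 1 : Pt n)) := by
        rw [← pi_eq_sum_univ']
    _ = _ := by
        rw [map_sum]
        exact Finset.sum_congr rfl fun r _ => by rw [map_smul, happly, smul_eq_mul]; rfl

theorem norm_iteratedFDeriv_le_of_abs_iterPd_le (hf : ContDiff ℝ ∞ f) {k : ℕ} {y : Pt n} {B : ℝ}
    (hB0 : 0 ≤ B) (hB : ∀ J : List (Fin n), J.length = k → |iterPd J f y| ≤ B) :
    ‖iteratedFDeriv ℝ k f y‖ ≤ n ^ k * B := by
  induction k generalizing f with
  | zero => simpa [iterPd] using hB [] rfl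
  | succ k ih =>
    refine ContinuousMultilinearMap.opNorm_le_bound (by positivity) fun m => ?_
    rw [iteratedFDeriv_succ_apply_eq_sum hf]
    calc ‖∑ r, m (Fin.last k) r * iteratedFDeriv ℝ k (pd r f) y (Fin.init m)‖
        ≤ ∑ _ : Fin n, ‖m (Fin.last k)‖ * (n ^ k * B * ∏ i, ‖Fin.init m i‖) := by
          refine norm_sum_le_of_le _ fun r _ => ?_
          rw [norm_mul]
          exact mul_le_mul (norm_le_pi_norm _ r)
            (ContinuousMultilinearMap.le_of_opNorm_le (ih (contDiff_pd hf r) fun J hJ =>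
              hB (r :: J) (by simp [hJ])) _) (norm_nonneg _) (norm_nonneg _)
      _ = n ^ (k + 1) * B * ∏ i, ‖m i‖ := by
          simp only [Fin.prod_univ_castSucc, Fin.init, Finset.sum_const, Finset.card_univ,
            Fintype.card_fin, nsmul_eq_mul]
          ring

theorem analyticAt_of_abs_iterPd_le (hf : ContDiff ℝ ∞ f) {x₀ : Pt n} {C q : ℝ} (hC : 0 ≤ C)
    (hq : 0 ≤ q) (hb : ∀ᶠ y in nhds x₀, ∀ J : List (Fin n),
      |iterPd J f y| ≤ C * q ^ J.length * J.length !) :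
    AnalyticAt ℝ f x₀ := by
  obtain ⟨r, hr, hball⟩ := Metric.eventually_nhds_iff_ball.1 hb
  refine analyticAt_of_norm_iteratedFDeriv_le (q := n * q + 1) hf hr hC (by positivity)
    fun k y hy => ?_
  calc ‖iteratedFDeriv ℝ k f y‖ ≤ n ^ k * (C * q ^ k * k !) :=
        norm_iteratedFDeriv_le_of_abs_iterPd_le hf (by positivity) fun J hJ => hJ ▸ hball y hy J
    _ = C * (n * q) ^ k * k ! := by ring
    _ ≤ C * (n * q + 1) ^ k * k ! := by
        gcongr
        linarith

theorem abs_iterPd_le_of_hasFirstJetBound {w : ι → Pt n → ℝ} {M ρ q : ℝ} {y : Pt n}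
    (hM : 0 ≤ M) (hρ : 0 ≤ ρ) (hρq : ρ ≤ q) (hq : 1 ≤ q)
    (h : ∀ k, HasFirstJetBound w k 1 ρ M y) (A : ι) (J : List (Fin n)) :
    |iterPd J (w A) y| ≤ M * q ^ J.length * J.length ! := by
  rcases J with - | ⟨i, J⟩
  · simpa [iterPd] using (h 0).abs_le A
  · have hjet := (h J.length).hasJetBound_pd A i J le_rfl
    rw [jetWeight_one] at hjet
    have hpow : ρ ^ J.length ≤ q ^ (J.length + 1) :=
      (pow_le_pow_left₀ hρ hρq _).trans (pow_le_pow_right₀ hq (Nat.le_succ _))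
    have hfact : factWeight J.length ≤ (J.length + 1)! :=
      (factWeight_le_factorial _).trans (by exact_mod_cast Nat.factorial_le (Nat.le_succ _))
    have hpos := (factWeight_pos J.length).le
    calc |iterPd (i :: J) (w A) y| ≤ M * (ρ ^ J.length * factWeight J.length) := hjet
      _ ≤ M * (q ^ (J.length + 1) * (J.length + 1)!) := by gcongr
      _ = M * q ^ (J.length + 1) * (J.length + 1)! := (mul_assoc _ _ _).symm

theorem IsQuasilinearSolution.analyticOnNhd [Finite ι] {w f : ι → Pt n → ℝ}
    {idx : Fin n → Fin n → ι} {U : Set (Pt n)} (h : IsQuasilinearSolution w idx f U) (A : ι) :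
    AnalyticOnNhd ℝ (w A) U := by
  intro x₀ hx₀
  obtain ⟨R, M, C, hR, hM, hC, hbound⟩ := h.exists_hasFirstJetBound hx₀
  have hnear : ∀ᶠ y in nhds x₀, euclNorm (y - x₀) < R / 2 := by
    have hcont : Continuous fun y : Pt n => euclNorm (y - x₀) :=
      continuous_euclNorm.comp (continuous_id.sub continuous_const)
    exact hcont.continuousAt.eventually_lt continuousAt_const (by simp [euclNorm_zero, hR])
  have hCR : 0 ≤ C / (R / 2) := by positivity
  refine analyticAt_of_abs_iterPd_le (q := 1 + C / (R / 2)) (h.contDiff A) hM (by positivity) ?_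
  filter_upwards [hnear] with y hy
  have hρ : C / (R - euclNorm (y - x₀)) ≤ 1 + C / (R / 2) :=
    calc C / (R - euclNorm (y - x₀)) ≤ C / (R / 2) := by
          gcongr
          linarith
      _ ≤ 1 + C / (R / 2) := le_add_of_nonneg_left zero_le_one
  exact abs_iterPd_le_of_hasFirstJetBound hM (div_nonneg hC (by linarith)) hρ
    (le_add_of_nonneg_right hCR) (fun k => hbound k y (by linarith)) A

end

section
open scoped ContDiff Matrix

/-! ### Riemannian metrics in a chart -/

theorem contDiff_det {E m : Type*} [NormedAddCommGroup E] [NormedSpace ℝ E] [Fintype m]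
    [DecidableEq m] {k : WithTop ℕ∞} {A : E → Matrix m m ℝ}
    (hA : ∀ i j, ContDiff ℝ k fun x => A x i j) : ContDiff ℝ k fun x => (A x).det := by
  simp only [Matrix.det_apply]
  exact ContDiff.sum fun σ _ => (contDiff_prod fun i _ => hA (σ i) i).const_smul _

theorem contDiff_adjugate {E m : Type*} [NormedAddCommGroup E] [NormedSpace ℝ E] [Fintype m]
    [DecidableEq m] {k : WithTop ℕ∞} {A : E → Matrix m m ℝ}
    (hA : ∀ i j, ContDiff ℝ k fun x => A x i j) (i j : m) :
    ContDiff ℝ k fun x => (A x).adjugate i j := by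
  simp only [Matrix.adjugate_apply]
  refine contDiff_det fun a b => ?_
  by_cases h : a = j
  · simpa only [Matrix.updateRow_apply, if_pos h] using contDiff_const
  · simpa only [Matrix.updateRow_apply, if_neg h] using hA a b

theorem contDiff_matrix_inv {E m : Type*} [NormedAddCommGroup E] [NormedSpace ℝ E] [Fintype m]
    [DecidableEq m] {k : WithTop ℕ∞} {A : E → Matrix m m ℝ}
    (hA : ∀ i j, ContDiff ℝ k fun x => A x i j) (hdet : ∀ x, (A x).det ≠ 0) (i j : m) :
    ContDiff ℝ k fun x => (A x)⁻¹ i j := by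
  simp only [Matrix.inv_def, Ring.inverse_eq_inv', Matrix.smul_apply, smul_eq_mul]
  exact ((contDiff_det hA).inv hdet).mul (contDiff_adjugate hA i j)

variable {n : ℕ} {g : Pt n → Fin n → Fin n → ℝ}

/-- The component `g_{ij}` as a function on the chart. -/
def metricComp (g : Pt n → Fin n → Fin n → ℝ) (i j : Fin n) : Pt n → ℝ := fun x => g x i j

/-- The component `g^{ij}` of the inverse metric as a function on the chart. -/
def inverseComp (g : Pt n → Fin n → Fin n → ℝ) (i j : Fin n) : Pt n → ℝ := fun x => ginv g x i j

/-- `g` is a smooth Riemannian metric on the whole chart. -/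
structure IsSmoothMetric (g : Pt n → Fin n → Fin n → ℝ) : Prop where
  symm : symT g
  pos : posdef g
  smooth : smoothT g

namespace IsSmoothMetric

theorem posDef (hg : IsSmoothMetric g) (x : Pt n) : (Matrix.of (g x)).PosDef := by
  refine Matrix.PosDef.of_dotProduct_mulVec_pos ?_ fun {v} hv => ?_
  · ext i j
    simp [hg.symm x i j]
  · refine (hg.pos x v hv).trans_eq ?_
    simp only [dotProduct, Matrix.mulVec, Finset.mul_sum, Matrix.of_apply, star_trivial]
    exact Finset.sum_congr rfl fun i _ => Finset.sum_congr rfl fun j _ => by ring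

theorem isUnit_det (hg : IsSmoothMetric g) (x : Pt n) : IsUnit (Matrix.of (g x)).det :=
  (Matrix.isUnit_iff_isUnit_det _).1 (hg.posDef x).isUnit

theorem contDiff_metricComp (hg : IsSmoothMetric g) (i j : Fin n) :
    ContDiff ℝ ∞ (metricComp g i j) :=
  hg.smooth i j

theorem contDiff_inverseComp (hg : IsSmoothMetric g) (i j : Fin n) :
    ContDiff ℝ ∞ (inverseComp g i j) :=
  contDiff_matrix_inv (A := fun x => Matrix.of (g x)) hg.smooth (fun x => (hg.isUnit_det x).ne_zero)
    i j

theorem differentiable_metricComp (hg : IsSmoothMetric g) (i j : Fin n) :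
    Differentiable ℝ (metricComp g i j) :=
  (hg.contDiff_metricComp i j).differentiable (by simp)

theorem differentiable_pd_metricComp (hg : IsSmoothMetric g) (k i j : Fin n) :
    Differentiable ℝ (pd k (metricComp g i j)) :=
  (contDiff_pd (hg.contDiff_metricComp i j) k).differentiable (by simp)

theorem differentiable_inverseComp (hg : IsSmoothMetric g) (i j : Fin n) :
    Differentiable ℝ (inverseComp g i j) :=
  (hg.contDiff_inverseComp i j).differentiable (by simp)

theorem metricComp_comm (hg : IsSmoothMetric g) (i j : Fin n) :
    metricComp g i j = metricComp g j i :=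
  funext fun x => hg.symm x i j

theorem inverseComp_comm (hg : IsSmoothMetric g) (i j : Fin n) :
    inverseComp g i j = inverseComp g j i := by
  funext x
  exact (hg.posDef x).inv.isHermitian.apply j i

theorem sum_metricComp_mul_sum_inverseComp (hg : IsSmoothMetric g) (X : Fin n → Pt n → ℝ)
    (i : Fin n) : ∑ k, metricComp g i k * ∑ l, inverseComp g k l * X l = X i := by
  funext x
  have hmul : Matrix.of (g x) *ᵥ ((Matrix.of (g x))⁻¹ *ᵥ fun l => X l x) = fun l => X l x := by
    rw [Matrix.mulVec_mulVec, Matrix.mul_nonsing_inv _ (hg.isUnit_det x), Matrix.one_mulVec]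
  simpa [Matrix.mulVec, dotProduct, metricComp, inverseComp, ginv] using congrFun hmul i

theorem sum_inverseComp_mul_sum_metricComp (hg : IsSmoothMetric g) (X : Fin n → Pt n → ℝ)
    (i : Fin n) : ∑ k, inverseComp g i k * ∑ l, metricComp g k l * X l = X i := by
  funext x
  have hmul : (Matrix.of (g x))⁻¹ *ᵥ (Matrix.of (g x) *ᵥ fun l => X l x) = fun l => X l x := by
    rw [Matrix.mulVec_mulVec, Matrix.nonsing_inv_mul _ (hg.isUnit_det x), Matrix.one_mulVec]
  simpa [Matrix.mulVec, dotProduct, metricComp, inverseComp, ginv] using congrFun hmul i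

theorem sum_metricComp_mul_inverseComp (hg : IsSmoothMetric g) (i j : Fin n) :
    ∑ k, metricComp g i k * inverseComp g k j = fun _ => (1 : Matrix (Fin n) (Fin n) ℝ) i j := by
  funext x
  simp [← Matrix.mul_nonsing_inv _ (hg.isUnit_det x), Matrix.mul_apply, metricComp, inverseComp,
    ginv]

theorem pd_inverseComp (hg : IsSmoothMetric g) (s i j : Fin n) :
    pd s (inverseComp g i j) =
      -∑ a, ∑ b, inverseComp g i a * pd s (metricComp g a b) * inverseComp g b j := by
  have hprod : ∀ a, ∑ b, metricComp g a b * pd s (inverseComp g b j) =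
      -∑ b, pd s (metricComp g a b) * inverseComp g b j := by
    intro a
    have hzero := congrArg (pd s) (hg.sum_metricComp_mul_inverseComp a j)
    rw [pd_const, pd_sum _ fun b _ =>
      (hg.differentiable_metricComp a b).mul (hg.differentiable_inverseComp b j)] at hzero
    simp only [pd_mul (hg.differentiable_metricComp _ _) (hg.differentiable_inverseComp _ _),
      Finset.sum_add_distrib] at hzero
    exact eq_neg_of_add_eq_zero_right hzero
  rw [← hg.sum_inverseComp_mul_sum_metricComp (fun b => pd s (inverseComp g b j)) i]
  simp only [hprod, mul_neg, Finset.sum_neg_distrib, Finset.mul_sum, mul_assoc]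

end IsSmoothMetric

end

section
open scoped ContDiff

variable {n : ℕ} {ι : Type*} {w : ι → Pt n → ℝ} {U : Set (Pt n)}

/-! ### Lower order expressions -/

/-- The functions which agree on `U` with a polynomial in the 1-jets of the family `w`. They are the
terms to be neglected when only the second order part of an expression in `w` matters on `U`. -/
def lowerOrderOn (w : ι → Pt n → ℝ) (U : Set (Pt n)) : Subalgebra ℝ (Pt n → ℝ) where
  carrier := {f | ∃ p ∈ Algebra.adjoin ℝ (firstJets w), Set.EqOn f p U}
  mul_mem' := by
    rintro f₁ f₂ ⟨p₁, hp₁, h₁⟩ ⟨p₂, hp₂, h₂⟩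
    exact ⟨p₁ * p₂, mul_mem hp₁ hp₂, fun x hx => congrArg₂ (· * ·) (h₁ hx) (h₂ hx)⟩
  add_mem' := by
    rintro f₁ f₂ ⟨p₁, hp₁, h₁⟩ ⟨p₂, hp₂, h₂⟩
    exact ⟨p₁ + p₂, add_mem hp₁ hp₂, fun x hx => congrArg₂ (· + ·) (h₁ hx) (h₂ hx)⟩
  algebraMap_mem' c := ⟨_, Subalgebra.algebraMap_mem _ c, fun _ _ => rfl⟩

theorem apply_mem_lowerOrderOn (A : ι) : w A ∈ lowerOrderOn w U :=
  ⟨w A, Algebra.subset_adjoin (.inl ⟨A, rfl⟩), fun _ _ => rfl⟩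

theorem pd_mem_lowerOrderOn (i : Fin n) (A : ι) : pd i (w A) ∈ lowerOrderOn w U :=
  ⟨pd i (w A), Algebra.subset_adjoin (.inr ⟨(i, A), rfl⟩), fun _ _ => rfl⟩

theorem mem_lowerOrderOn_of_eqOn {f h : Pt n → ℝ} (hh : h ∈ lowerOrderOn w U)
    (hfh : Set.EqOn f h U) : f ∈ lowerOrderOn w U := by
  obtain ⟨p, hp, hhp⟩ := hh
  exact ⟨p, hp, hfh.trans hhp⟩

variable {g : Pt n → Fin n → Fin n → ℝ} {u : Pt n → ℝ}

/-- Labels of the unknowns of the static vacuum system. The inverse metric and `1 / u` are listed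
as unknowns of their own to make the equations polynomial in the 1-jets. -/
inductive StaticUnknown (n : ℕ)
  | metric (i j : Fin n)
  | inverse (i j : Fin n)
  | potential
  | potentialInv

/-- The functions `g_{ij}`, `g^{ij}`, `u` and `1 / u` of a metric `g` and a potential `u`. -/
def staticUnknowns (g : Pt n → Fin n → Fin n → ℝ) (u : Pt n → ℝ) : StaticUnknown n → Pt n → ℝ
  | .metric i j => metricComp g i j
  | .inverse i j => inverseComp g i j
  | .potential => u
  | .potentialInv => u⁻¹

instance StaticUnknown.instFinite : Finite (StaticUnknown n) := by
  let label : (Fin n × Fin n) ⊕ (Fin n × Fin n) ⊕ Bool → StaticUnknown n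
    | .inl p => .metric p.1 p.2
    | .inr (.inl p) => .inverse p.1 p.2
    | .inr (.inr b) => bif b then .potential else .potentialInv
  refine Finite.of_surjective label ?_
  rintro (⟨i, j⟩ | ⟨i, j⟩ | - | -)
  exacts [⟨.inl (i, j), rfl⟩, ⟨.inr (.inl (i, j)), rfl⟩, ⟨.inr (.inr true), rfl⟩,
    ⟨.inr (.inr false), rfl⟩]

theorem contDiff_staticUnknowns (hg : IsSmoothMetric g) (hu : ContDiff ℝ ∞ u)
    (hu₀ : ∀ x, u x ≠ 0) : ∀ A, ContDiff ℝ ∞ (staticUnknowns g u A)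
  | .metric i j => hg.contDiff_metricComp i j
  | .inverse i j => hg.contDiff_inverseComp i j
  | .potential => hu
  | .potentialInv => hu.inv hu₀

theorem inverseComp_mem_lowerOrderOn (i j : Fin n) :
    inverseComp g i j ∈ lowerOrderOn (staticUnknowns g u) U :=
  apply_mem_lowerOrderOn (StaticUnknown.inverse i j)

theorem potentialInv_mem_lowerOrderOn : u⁻¹ ∈ lowerOrderOn (staticUnknowns g u) U :=
  apply_mem_lowerOrderOn StaticUnknown.potentialInv

theorem pd_metricComp_mem_lowerOrderOn (k i j : Fin n) :
    pd k (metricComp g i j) ∈ lowerOrderOn (staticUnknowns g u) U :=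
  pd_mem_lowerOrderOn k (StaticUnknown.metric i j)

theorem pd_inverseComp_mem_lowerOrderOn (k i j : Fin n) :
    pd k (inverseComp g i j) ∈ lowerOrderOn (staticUnknowns g u) U :=
  pd_mem_lowerOrderOn k (StaticUnknown.inverse i j)

theorem pd_potential_mem_lowerOrderOn (k : Fin n) :
    pd k u ∈ lowerOrderOn (staticUnknowns g u) U :=
  pd_mem_lowerOrderOn k StaticUnknown.potential

theorem exists_eq_of_mem_firstJets (hg : IsSmoothMetric g) (hu : Differentiable ℝ u)
    (hu₀ : ∀ x, u x ≠ 0) {f : Pt n → ℝ} (hf : f ∈ firstJets (staticUnknowns g u)) :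
    ∃ Φ : (Fin n → Fin n → ℝ) → (Fin n → Fin n → Fin n → ℝ) → ℝ → (Fin n → ℝ) → ℝ,
      ∀ x, f x = Φ (g x) (fun k a b => pd k (metricComp g a b) x) (u x) fun k => pd k u x := by
  rcases hf with ⟨⟨i, j⟩ | ⟨i, j⟩ | - | -, rfl⟩ | ⟨⟨k, ⟨i, j⟩ | ⟨i, j⟩ | - | -⟩, rfl⟩
  · exact ⟨fun G _ _ _ => G i j, fun x => rfl⟩
  · exact ⟨fun G _ _ _ => (Matrix.of G)⁻¹ i j, fun x => rfl⟩
  · exact ⟨fun _ _ v _ => v, fun x => rfl⟩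
  · exact ⟨fun _ _ v _ => v⁻¹, fun x => rfl⟩
  · exact ⟨fun _ D _ _ => D k i j, fun x => rfl⟩
  · refine ⟨fun G D _ _ =>
      -∑ a, ∑ b, (Matrix.of G)⁻¹ i a * D k a b * (Matrix.of G)⁻¹ b j, fun x => ?_⟩
    simp only [staticUnknowns, hg.pd_inverseComp, Pi.neg_apply, Finset.sum_apply, Pi.mul_apply]
    rfl
  · exact ⟨fun _ _ _ d => d k, fun x => rfl⟩
  · exact ⟨fun _ _ v d => -(v⁻¹ * v⁻¹ * d k), fun x => congrFun (pd_inv hu hu₀ k) x⟩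

theorem exists_eqOn_of_mem_lowerOrderOn (hg : IsSmoothMetric g) (hu : Differentiable ℝ u)
    (hu₀ : ∀ x, u x ≠ 0) {f : Pt n → ℝ} (hf : f ∈ lowerOrderOn (staticUnknowns g u) U) :
    ∃ Φ : (Fin n → Fin n → ℝ) → (Fin n → Fin n → Fin n → ℝ) → ℝ → (Fin n → ℝ) → ℝ,
      ∀ x ∈ U, f x = Φ (g x) (fun k a b => pd k (metricComp g a b) x) (u x) fun k => pd k u x := by
  obtain ⟨p, hp, hfp⟩ := hf
  suffices h : ∃ Φ : (Fin n → Fin n → ℝ) → (Fin n → Fin n → Fin n → ℝ) → ℝ → (Fin n → ℝ) → ℝ,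
      ∀ x, p x = Φ (g x) (fun k a b => pd k (metricComp g a b) x) (u x) fun k => pd k u x by
    obtain ⟨Φ, hΦ⟩ := h
    exact ⟨Φ, fun x hx => (hfp hx).trans (hΦ x)⟩
  clear hfp
  induction hp using Algebra.adjoin_induction with
  | mem s hs => exact exists_eq_of_mem_firstJets hg hu hu₀ hs
  | algebraMap c => exact ⟨fun _ _ _ _ => c, fun x => rfl⟩
  | add p q _ _ ihp ihq =>
    obtain ⟨Φ, hΦ⟩ := ihp
    obtain ⟨Ψ, hΨ⟩ := ihq
    exact ⟨fun G D v d => Φ G D v d + Ψ G D v d, fun x => congrArg₂ (· + ·) (hΦ x) (hΨ x)⟩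
  | mul p q _ _ ihp ihq =>
    obtain ⟨Φ, hΦ⟩ := ihp
    obtain ⟨Ψ, hΨ⟩ := ihq
    exact ⟨fun G D v d => Φ G D v d * Ψ G D v d, fun x => congrArg₂ (· * ·) (hΦ x) (hΨ x)⟩

end

section
variable {n : ℕ} {g : Pt n → Fin n → Fin n → ℝ} {u : Pt n → ℝ} {U : Set (Pt n)}

/-! ### The second order part of the Ricci curvature -/

/-- The Christoffel symbol of the first kind `Γ_{k,ij}` as a function on the chart. -/
def christoffelFirst (g : Pt n → Fin n → Fin n → ℝ) (k i j : Fin n) : Pt n → ℝ :=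
  (1 / 2 : ℝ) • (pd i (metricComp g j k) + pd j (metricComp g i k) - pd k (metricComp g i j))

/-- The Christoffel symbol of the second kind `Γ^k_{ij}` as a function on the chart. -/
def christoffelSecond (g : Pt n → Fin n → Fin n → ℝ) (k i j : Fin n) : Pt n → ℝ :=
  ∑ l, inverseComp g k l * christoffelFirst g l i j

theorem chr_eq_christoffelSecond (x : Pt n) (k i j : Fin n) :
    chr g x k i j = christoffelSecond g k i j x := by
  simp only [chr, christoffelSecond, christoffelFirst, Finset.mul_sum, Finset.sum_apply,
    Pi.mul_apply, Pi.smul_apply, smul_eq_mul]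
  exact Finset.sum_congr rfl fun l _ => mul_left_comm _ _ _

theorem christoffelFirst_mem_lowerOrderOn (k i j : Fin n) :
    christoffelFirst g k i j ∈ lowerOrderOn (staticUnknowns g u) U :=
  Subalgebra.smul_mem _ (sub_mem (add_mem (pd_metricComp_mem_lowerOrderOn _ _ _)
    (pd_metricComp_mem_lowerOrderOn _ _ _)) (pd_metricComp_mem_lowerOrderOn _ _ _)) _

theorem christoffelSecond_mem_lowerOrderOn (k i j : Fin n) :
    christoffelSecond g k i j ∈ lowerOrderOn (staticUnknowns g u) U :=
  sum_mem fun _ _ => mul_mem (inverseComp_mem_lowerOrderOn _ _)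
    (christoffelFirst_mem_lowerOrderOn _ _ _)

namespace IsSmoothMetric

theorem differentiable_christoffelFirst (hg : IsSmoothMetric g) (k i j : Fin n) :
    Differentiable ℝ (christoffelFirst g k i j) :=
  (((hg.differentiable_pd_metricComp _ _ _).add (hg.differentiable_pd_metricComp _ _ _)).sub
    (hg.differentiable_pd_metricComp _ _ _)).const_smul _

theorem pd_christoffelFirst (hg : IsSmoothMetric g) (a k i j : Fin n) :
    pd a (christoffelFirst g k i j) = (1 / 2 : ℝ) • (pd a (pd i (metricComp g j k)) +
      pd a (pd j (metricComp g i k)) - pd a (pd k (metricComp g i j))) := by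
  have hd := hg.differentiable_pd_metricComp
  rw [christoffelFirst, pd_smul (((hd _ _ _).add (hd _ _ _)).sub (hd _ _ _)),
    pd_sub ((hd _ _ _).add (hd _ _ _)) (hd _ _ _), pd_add (hd _ _ _) (hd _ _ _)]

theorem pd_sum_inverseComp_mul_sub_mem_lowerOrderOn (hg : IsSmoothMetric g) {ι : Type*}
    [Fintype ι] (a : Fin n) (r s : ι → Fin n) {X : ι → Pt n → ℝ}
    (hX : ∀ t, Differentiable ℝ (X t))
    (hXU : ∀ t, X t ∈ lowerOrderOn (staticUnknowns g u) U) :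
    pd a (∑ t, inverseComp g (r t) (s t) * X t) - ∑ t, inverseComp g (r t) (s t) * pd a (X t) ∈
      lowerOrderOn (staticUnknowns g u) U := by
  rw [pd_sum _ fun t _ => (hg.differentiable_inverseComp _ _).mul (hX t),
    ← Finset.sum_sub_distrib]
  refine sum_mem fun t _ => ?_
  rw [pd_mul (hg.differentiable_inverseComp _ _) (hX t), add_sub_cancel_right]
  exact mul_mem (pd_inverseComp_mem_lowerOrderOn _ _ _) (hXU t)

theorem pd_christoffelSecond_sub_mem_lowerOrderOn (hg : IsSmoothMetric g) (a k i j : Fin n) :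
    pd a (christoffelSecond g k i j) - ∑ l, inverseComp g k l * pd a (christoffelFirst g l i j) ∈
      lowerOrderOn (staticUnknowns g u) U :=
  hg.pd_sum_inverseComp_mul_sub_mem_lowerOrderOn a (fun _ => k) id
    (fun l => hg.differentiable_christoffelFirst l i j)
    fun l => christoffelFirst_mem_lowerOrderOn l i j

theorem ric_sub_mem_lowerOrderOn (hg : IsSmoothMetric g) (i j : Fin n) :
    (fun x => ric g x i j) - ∑ l, ∑ m, inverseComp g l m *
        (pd l (christoffelFirst g m i j) - pd j (christoffelFirst g m i l)) ∈
      lowerOrderOn (staticUnknowns g u) U := by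
  have hric : (fun x => ric g x i j) =
      ∑ l, (pd l (christoffelSecond g l i j) - pd j (christoffelSecond g l i l) +
        ∑ m, christoffelSecond g l m l * christoffelSecond g m i j -
        ∑ m, christoffelSecond g l m j * christoffelSecond g m i l) := by
    funext x
    simp only [ric, riem, chr_eq_christoffelSecond, Finset.sum_apply, Pi.add_apply, Pi.sub_apply,
      Pi.mul_apply]
  have hquad : ∀ l a b c, ∑ m, christoffelSecond g l m a * christoffelSecond g m b c ∈
      lowerOrderOn (staticUnknowns g u) U := fun l a b c =>
    sum_mem fun m _ => mul_mem (christoffelSecond_mem_lowerOrderOn _ _ _)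
      (christoffelSecond_mem_lowerOrderOn _ _ _)
  rw [hric, ← Finset.sum_sub_distrib]
  refine sum_mem fun l _ => ?_
  have h₁ := hg.pd_christoffelSecond_sub_mem_lowerOrderOn (u := u) (U := U) l l i j
  have h₂ := hg.pd_christoffelSecond_sub_mem_lowerOrderOn (u := u) (U := U) j l i l
  convert sub_mem (add_mem (sub_mem h₁ h₂) (hquad l l i j)) (hquad l j i l) using 1
  simp only [mul_sub, Finset.sum_sub_distrib]
  ring

end IsSmoothMetric

/-- The principal part `g^{rs} ∂_r ∂_s` of the Laplace-Beltrami operator. -/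
def principalOp (g : Pt n → Fin n → Fin n → ℝ) (f : Pt n → ℝ) : Pt n → ℝ :=
  ∑ r, ∑ s, inverseComp g r s * pd r (pd s f)

/-- The second order part `g^{lm} ∂_a Γ_{c,lm}` of the derivative `∂_a Γ_c` of the contracted
Christoffel symbol. -/
def gaugeDeriv (g : Pt n → Fin n → Fin n → ℝ) (a c : Fin n) : Pt n → ℝ :=
  ∑ l, ∑ m, inverseComp g l m * pd a (christoffelFirst g c l m)

theorem sum_sum_mul_eq_of_symm {R ι : Type*} [CommRing R] [IsAddTorsionFree R] [Fintype ι]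
    {H A B : ι → ι → R} (hH : ∀ i j, H i j = H j i)
    (hAB : ∀ i j, A i j + A j i = B i j + B j i) :
    ∑ i, ∑ j, H i j * A i j = ∑ i, ∑ j, H i j * B i j := by
  have hdouble : ∀ C : ι → ι → R,
      2 • ∑ i, ∑ j, H i j * C i j = ∑ i, ∑ j, H i j * (C i j + C j i) := by
    intro C
    rw [two_nsmul]
    simp only [mul_add, Finset.sum_add_distrib]
    congr 1
    rw [Finset.sum_comm]
    simp only [hH]
  refine nsmul_right_injective two_ne_zero ?_
  simp only [hdouble, hAB]

namespace IsSmoothMetric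

theorem sum_inverseComp_mul_pd_christoffelFirst_sub (hg : IsSmoothMetric g) (i j : Fin n) :
    ∑ l, ∑ m, inverseComp g l m *
        (pd l (christoffelFirst g m i j) - pd j (christoffelFirst g m i l)) =
      (1 / 2 : ℝ) • (gaugeDeriv g i j + gaugeDeriv g j i) -
        (1 / 2 : ℝ) • principalOp g (metricComp g i j) := by
  simp only [principalOp, gaugeDeriv, ← Finset.sum_add_distrib, ← Finset.sum_sub_distrib,
    Finset.smul_sum, ← mul_add, ← mul_smul_comm, ← mul_sub]
  refine sum_sum_mul_eq_of_symm hg.inverseComp_comm fun l m => ?_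
  have hcomm : ∀ a b c d, pd a (pd b (metricComp g c d)) = pd b (pd a (metricComp g c d)) :=
    fun a b c d => pd_comm (hg.contDiff_metricComp c d) a b
  simp only [hg.pd_christoffelFirst, hg.metricComp_comm m i, hg.metricComp_comm l i,
    hg.metricComp_comm m j, hg.metricComp_comm l j, hg.metricComp_comm m l,
    hcomm j i, hcomm l i, hcomm l j, hcomm m i, hcomm m j, hcomm m l]
  module

end IsSmoothMetric
end

section
open scoped ContDiff

variable {n : ℕ} {g : Pt n → Fin n → Fin n → ℝ} {u : Pt n → ℝ} {U : Set (Pt n)}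

/-! ### The static-harmonic gauge -/

/-- The coordinates are static-harmonic on `U`: `-Γ^k + u⁻¹ g^{ik} ∂_i u = 0`. -/
def IsStaticHarmonicOn (g : Pt n → Fin n → Fin n → ℝ) (u : Pt n → ℝ) (U : Set (Pt n)) : Prop :=
  ∀ x ∈ U, ∀ k : Fin n, -(∑ i, ∑ j, ginv g x i j * chr g x k i j) +
    (u x)⁻¹ * ∑ i, ginv g x i k * pd i u x = 0

/-- The contracted Christoffel symbol `Γ_c = g^{lm} Γ_{c,lm}`. -/
def gaugeCov (g : Pt n → Fin n → Fin n → ℝ) (c : Fin n) : Pt n → ℝ :=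
  ∑ l, ∑ m, inverseComp g l m * christoffelFirst g c l m

theorem sum_inverseComp_mul_christoffelSecond (g : Pt n → Fin n → Fin n → ℝ) (k : Fin n) :
    ∑ i, ∑ j, inverseComp g i j * christoffelSecond g k i j =
      ∑ l, inverseComp g k l * gaugeCov g l := by
  have hprod : ∑ p : Fin n × Fin n, inverseComp g p.1 p.2 *
      ∑ l, inverseComp g k l * christoffelFirst g l p.1 p.2 =
        ∑ l, inverseComp g k l * ∑ p : Fin n × Fin n,
          inverseComp g p.1 p.2 * christoffelFirst g l p.1 p.2 := by
    simp only [Finset.mul_sum]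
    rw [Finset.sum_comm]
    exact Finset.sum_congr rfl fun l _ => Finset.sum_congr rfl fun p _ => mul_left_comm _ _ _
  simpa only [christoffelSecond, gaugeCov, Fintype.sum_prod_type] using hprod

namespace IsStaticHarmonicOn

theorem sum_inverseComp_mul_gaugeCov (hgauge : IsStaticHarmonicOn g u U) (hg : IsSmoothMetric g)
    (k : Fin n) : Set.EqOn (∑ l, inverseComp g k l * gaugeCov g l)
      (∑ l, inverseComp g k l * (u⁻¹ * pd l u)) U := by
  intro x hx
  rw [← sum_inverseComp_mul_christoffelSecond]
  have hk := neg_add_eq_zero.1 (hgauge x hx k)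
  simp only [chr_eq_christoffelSecond, Finset.mul_sum] at hk
  simp only [Finset.sum_apply, Pi.mul_apply, Pi.inv_apply]
  refine hk.trans (Finset.sum_congr rfl fun l _ => ?_)
  rw [hg.inverseComp_comm k l]
  exact mul_left_comm _ _ _

theorem gaugeCov_eqOn (hgauge : IsStaticHarmonicOn g u U) (hg : IsSmoothMetric g) (c : Fin n) :
    Set.EqOn (gaugeCov g c) (u⁻¹ * pd c u) U := by
  intro x hx
  rw [← hg.sum_metricComp_mul_sum_inverseComp (gaugeCov g) c,
    ← hg.sum_metricComp_mul_sum_inverseComp (fun l => u⁻¹ * pd l u) c]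
  simp only [Finset.sum_apply, Pi.mul_apply]
  refine Finset.sum_congr rfl fun k _ => congrArg _ ?_
  simpa only [Finset.sum_apply, Pi.mul_apply] using hgauge.sum_inverseComp_mul_gaugeCov hg k hx

end IsStaticHarmonicOn

theorem IsSmoothMetric.pd_gaugeCov_sub_mem_lowerOrderOn (hg : IsSmoothMetric g) (a c : Fin n) :
    pd a (gaugeCov g c) - gaugeDeriv g a c ∈ lowerOrderOn (staticUnknowns g u) U := by
  simp only [gaugeCov, gaugeDeriv, ← Fintype.sum_prod_type']
  exact hg.pd_sum_inverseComp_mul_sub_mem_lowerOrderOn a Prod.fst Prod.snd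
    (fun p => hg.differentiable_christoffelFirst c p.1 p.2)
    fun p => christoffelFirst_mem_lowerOrderOn c p.1 p.2

theorem IsStaticHarmonicOn.gaugeDeriv_sub_mem_lowerOrderOn (hgauge : IsStaticHarmonicOn g u U)
    (hU : IsOpen U) (hg : IsSmoothMetric g) (hu : ContDiff ℝ ∞ u) (hu₀ : ∀ x, u x ≠ 0)
    (a c : Fin n) :
    gaugeDeriv g a c - u⁻¹ * pd a (pd c u) ∈ lowerOrderOn (staticUnknowns g u) U := by
  have hinv : Differentiable ℝ u⁻¹ := (hu.inv hu₀).differentiable (by simp)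
  have hpd : Set.EqOn (pd a (gaugeCov g c)) (pd a (u⁻¹ * pd c u)) U := fun x hx =>
    (pd_congr (Filter.eventuallyEq_of_mem (hU.mem_nhds hx) (hgauge.gaugeCov_eqOn hg c))
      a).self_of_nhds
  rw [pd_mul hinv ((contDiff_pd hu c).differentiable (by simp))] at hpd
  have hlow : pd a u⁻¹ * pd c u ∈ lowerOrderOn (staticUnknowns g u) U :=
    mul_mem (pd_mem_lowerOrderOn a StaticUnknown.potentialInv) (pd_potential_mem_lowerOrderOn c)
  refine mem_lowerOrderOn_of_eqOn
    (sub_mem hlow (hg.pd_gaugeCov_sub_mem_lowerOrderOn a c)) fun x hx => ?_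
  have hx' := hpd hx
  simp only [Pi.add_apply, Pi.sub_apply, Pi.mul_apply] at hx' ⊢
  linarith

theorem hess_eq (g : Pt n → Fin n → Fin n → ℝ) (u : Pt n → ℝ) (i j : Fin n) :
    (fun x => hess g u x i j) = pd j (pd i u) - ∑ k, christoffelSecond g k i j * pd k u := by
  funext x
  simp only [hess, cdCov, chr_eq_christoffelSecond, Pi.sub_apply, Finset.sum_apply, Pi.mul_apply]

theorem hess_sub_mem_lowerOrderOn (i j : Fin n) :
    (fun x => hess g u x i j) - pd j (pd i u) ∈ lowerOrderOn (staticUnknowns g u) U := by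
  rw [hess_eq, sub_sub_cancel_left]
  exact neg_mem (sum_mem fun k _ =>
    mul_mem (christoffelSecond_mem_lowerOrderOn _ _ _) (pd_potential_mem_lowerOrderOn _))

namespace IsStaticHarmonicOn

theorem neg_ric_add_hess_sub_mem_lowerOrderOn (hgauge : IsStaticHarmonicOn g u U) (hU : IsOpen U)
    (hg : IsSmoothMetric g) (hu : ContDiff ℝ ∞ u) (hu₀ : ∀ x, u x ≠ 0) (i j : Fin n) :
    -(fun x => ric g x i j) + u⁻¹ * (fun x => hess g u x i j) -
        (1 / 2 : ℝ) • principalOp g (metricComp g i j) ∈ lowerOrderOn (staticUnknowns g u) U := by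
  have hric := hg.ric_sub_mem_lowerOrderOn (u := u) (U := U) i j
  rw [hg.sum_inverseComp_mul_pd_christoffelFirst_sub] at hric
  have hderiv := Subalgebra.smul_mem _ (add_mem
    (hgauge.gaugeDeriv_sub_mem_lowerOrderOn hU hg hu hu₀ i j)
    (hgauge.gaugeDeriv_sub_mem_lowerOrderOn hU hg hu hu₀ j i)) (1 / 2 : ℝ)
  have hhess := mul_mem (potentialInv_mem_lowerOrderOn (g := g) (U := U))
    (hess_sub_mem_lowerOrderOn (g := g) (u := u) i j)
  convert sub_mem (sub_mem hhess hric) hderiv using 1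
  rw [pd_comm hu j i]
  funext x
  simp only [Pi.add_apply, Pi.sub_apply, Pi.neg_apply, Pi.mul_apply, Pi.smul_apply, smul_eq_mul]
  ring

theorem exists_neg_ric_add_hess_eq (hgauge : IsStaticHarmonicOn g u U) (hU : IsOpen U)
    (hg : IsSmoothMetric g) (hu : ContDiff ℝ ∞ u) (hu₀ : ∀ x, u x ≠ 0) :
    ∃ F : (Fin n → Fin n → ℝ) → (Fin n → Fin n → Fin n → ℝ) → ℝ → (Fin n → ℝ) →
        Fin n → Fin n → ℝ,
      ∀ x ∈ U, ∀ i j : Fin n, -(ric g x i j) + (u x)⁻¹ * hess g u x i j =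
        (1 / 2) * (∑ r, ∑ s, ginv g x r s * pd2 r s (fun y => g y i j) x) +
          F (g x) (fun k a b => pd k (fun y => g y a b) x) (u x) (fun k => pd k u x) i j := by
  choose Φ hΦ using fun i j => exists_eqOn_of_mem_lowerOrderOn hg (hu.differentiable (by simp)) hu₀
    (hgauge.neg_ric_add_hess_sub_mem_lowerOrderOn hU hg hu hu₀ i j)
  refine ⟨fun G D v d i j => Φ i j G D v d, fun x hx i j => ?_⟩
  have hprincipal : principalOp g (metricComp g i j) x =
      ∑ r, ∑ s, ginv g x r s * pd2 r s (fun y => g y i j) x := by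
    simp only [principalOp, Finset.sum_apply]
    rfl
  rw [← hprincipal]
  exact sub_eq_iff_eq_add'.1 (hΦ i j x hx)

end IsStaticHarmonicOn

end

section
open scoped ContDiff

variable {n : ℕ} {g : Pt n → Fin n → Fin n → ℝ} {u : Pt n → ℝ} {U : Set (Pt n)}

/-! ### The equations for the metric, the potential and their inverses -/

theorem principalOp_const (g : Pt n → Fin n → Fin n → ℝ) (c : ℝ) :
    principalOp g (fun _ => c) = 0 := by
  have hzero : ∀ r : Fin n, pd r (0 : Pt n → ℝ) = 0 := pd_const 0
  simp only [principalOp, pd_const, hzero, mul_zero, Finset.sum_const_zero]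

theorem principalOp_sum {ι : Type*} (s : Finset ι) {F : ι → Pt n → ℝ}
    (hF : ∀ a, ContDiff ℝ ∞ (F a)) :
    principalOp g (∑ a ∈ s, F a) = ∑ a ∈ s, principalOp g (F a) := by
  simp only [principalOp, pd_sum s fun a _ => (hF a).differentiable (by simp),
    pd_sum s fun a _ => (contDiff_pd (hF a) _).differentiable (by simp), Finset.mul_sum]
  simp only [Finset.sum_comm (t := s)]

theorem principalOp_mul {p q : Pt n → ℝ} (hp : ContDiff ℝ ∞ p) (hq : ContDiff ℝ ∞ q) :
    principalOp g (p * q) = p * principalOp g q + q * principalOp g p +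
      ∑ r, ∑ s, inverseComp g r s * (pd r p * pd s q + pd s p * pd r q) := by
  have hdiff : ∀ {f : Pt n → ℝ}, ContDiff ℝ ∞ f → Differentiable ℝ f :=
    fun hf => hf.differentiable (by simp)
  simp only [principalOp, Finset.mul_sum, ← Finset.sum_add_distrib]
  refine Finset.sum_congr rfl fun r _ => Finset.sum_congr rfl fun s _ => ?_
  have hp' := contDiff_pd hp s
  have hq' := contDiff_pd hq s
  rw [pd_mul (hdiff hp) (hdiff hq), pd_add ((hdiff hp').mul (hdiff hq))
      ((hdiff hp).mul (hdiff hq')),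
    pd_mul (hdiff hp') (hdiff hq), pd_mul (hdiff hp) (hdiff hq')]
  ring

theorem principalOp_mul_sub_mem_lowerOrderOn (hg : IsSmoothMetric g) (hu : ContDiff ℝ ∞ u)
    (hu₀ : ∀ x, u x ≠ 0) (A B : StaticUnknown n) :
    principalOp g (staticUnknowns g u A * staticUnknowns g u B) -
        (staticUnknowns g u A * principalOp g (staticUnknowns g u B) +
          staticUnknowns g u B * principalOp g (staticUnknowns g u A)) ∈
      lowerOrderOn (staticUnknowns g u) U := by
  have hsmooth := contDiff_staticUnknowns hg hu hu₀
  rw [principalOp_mul (hsmooth A) (hsmooth B), add_sub_cancel_left]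
  exact sum_mem fun r _ => sum_mem fun s _ => mul_mem (inverseComp_mem_lowerOrderOn _ _)
    (add_mem (mul_mem (pd_mem_lowerOrderOn _ _) (pd_mem_lowerOrderOn _ _))
      (mul_mem (pd_mem_lowerOrderOn _ _) (pd_mem_lowerOrderOn _ _)))

theorem principalOp_inverseComp_mem_lowerOrderOn (hg : IsSmoothMetric g) (hu : ContDiff ℝ ∞ u)
    (hu₀ : ∀ x, u x ≠ 0)
    (hmetric : ∀ i j, principalOp g (metricComp g i j) ∈ lowerOrderOn (staticUnknowns g u) U)
    (i j : Fin n) :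
    principalOp g (inverseComp g i j) ∈ lowerOrderOn (staticUnknowns g u) U := by
  have hrow : ∀ a, ∑ b, metricComp g a b * principalOp g (inverseComp g b j) ∈
      lowerOrderOn (staticUnknowns g u) U := by
    intro a
    have hzero := congrArg (principalOp g) (hg.sum_metricComp_mul_inverseComp a j)
    rw [principalOp_const, principalOp_sum _
      (F := fun b => metricComp g a b * inverseComp g b j) fun b =>
        (hg.contDiff_metricComp a b).mul (hg.contDiff_inverseComp b j)] at hzero
    have hleibniz := sum_mem (t := Finset.univ) fun (b : Fin n) _ =>
      principalOp_mul_sub_mem_lowerOrderOn (U := U) hg hu hu₀ (.metric a b) (.inverse b j)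
    simp only [staticUnknowns, Finset.sum_sub_distrib, hzero, Finset.sum_add_distrib] at hleibniz
    have hlow : ∑ b, inverseComp g b j * principalOp g (metricComp g a b) ∈
        lowerOrderOn (staticUnknowns g u) U :=
      sum_mem fun b _ => mul_mem (inverseComp_mem_lowerOrderOn b j) (hmetric a b)
    convert neg_mem (add_mem hleibniz hlow) using 1
    ring
  rw [← hg.sum_inverseComp_mul_sum_metricComp (fun b => principalOp g (inverseComp g b j)) i]
  exact sum_mem fun a _ => mul_mem (inverseComp_mem_lowerOrderOn i a) (hrow a)

theorem principalOp_potentialInv_mem_lowerOrderOn (hg : IsSmoothMetric g) (hu : ContDiff ℝ ∞ u)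
    (hu₀ : ∀ x, u x ≠ 0) (hpotential : principalOp g u ∈ lowerOrderOn (staticUnknowns g u) U) :
    principalOp g u⁻¹ ∈ lowerOrderOn (staticUnknowns g u) U := by
  have hinv : u⁻¹ * u = fun _ => 1 := funext fun x => inv_mul_cancel₀ (hu₀ x)
  have hone : u⁻¹ * u = 1 := hinv
  have hleibniz :=
    principalOp_mul_sub_mem_lowerOrderOn (U := U) hg hu hu₀ .potentialInv .potential
  simp only [staticUnknowns] at hleibniz
  rw [hinv, principalOp_const] at hleibniz
  have hlow := mul_mem (potentialInv_mem_lowerOrderOn (g := g) (u := u) (U := U)) (neg_mem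
    (add_mem hleibniz (mul_mem (potentialInv_mem_lowerOrderOn (g := g) (u := u)) hpotential)))
  convert hlow using 1
  linear_combination -principalOp g u⁻¹ * hone

theorem lapf_sub_mem_lowerOrderOn (hu : ContDiff ℝ ∞ u) :
    (fun x => lapf g u x) - principalOp g u ∈ lowerOrderOn (staticUnknowns g u) U := by
  have hlapf : (fun x => lapf g u x) = ∑ i, ∑ j, inverseComp g i j * fun x => hess g u x i j := by
    funext x
    simp only [lapf, Finset.sum_apply, Pi.mul_apply]
    rfl
  simp only [hlapf, principalOp, ← Finset.sum_sub_distrib, ← mul_sub]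
  exact sum_mem fun i _ => sum_mem fun j _ => mul_mem (inverseComp_mem_lowerOrderOn i j)
    (pd_comm hu j i ▸ hess_sub_mem_lowerOrderOn i j)

theorem principalOp_potential_mem_lowerOrderOn (hu : ContDiff ℝ ∞ u)
    (hlap : ∀ x ∈ U, lapf g u x = 0) : principalOp g u ∈ lowerOrderOn (staticUnknowns g u) U := by
  have hzero : (fun x => lapf g u x) ∈ lowerOrderOn (staticUnknowns g u) U :=
    mem_lowerOrderOn_of_eqOn (zero_mem _) hlap
  simpa only [sub_sub_cancel] using sub_mem hzero (lapf_sub_mem_lowerOrderOn hu)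

namespace IsStaticHarmonicOn

theorem principalOp_metricComp_mem_lowerOrderOn (hgauge : IsStaticHarmonicOn g u U)
    (hU : IsOpen U) (hg : IsSmoothMetric g) (hu : ContDiff ℝ ∞ u) (hu₀ : ∀ x, u x ≠ 0)
    (hric : ∀ x ∈ U, ∀ i j, ric g x i j = (u x)⁻¹ * hess g u x i j) (i j : Fin n) :
    principalOp g (metricComp g i j) ∈ lowerOrderOn (staticUnknowns g u) U := by
  have hzero : -(fun x => ric g x i j) + u⁻¹ * (fun x => hess g u x i j) ∈
      lowerOrderOn (staticUnknowns g u) U :=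
    mem_lowerOrderOn_of_eqOn (zero_mem _) fun x hx => neg_add_eq_zero.2 (hric x hx i j)
  have htwice := Subalgebra.smul_mem _ (sub_mem hzero
    (hgauge.neg_ric_add_hess_sub_mem_lowerOrderOn hU hg hu hu₀ i j)) (2 : ℝ)
  rwa [sub_sub_cancel, smul_smul, mul_one_div_cancel two_ne_zero, one_smul] at htwice

theorem principalOp_staticUnknowns_mem_lowerOrderOn (hgauge : IsStaticHarmonicOn g u U)
    (hU : IsOpen U) (hg : IsSmoothMetric g) (hu : ContDiff ℝ ∞ u) (hu₀ : ∀ x, u x ≠ 0)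
    (hric : ∀ x ∈ U, ∀ i j, ric g x i j = (u x)⁻¹ * hess g u x i j)
    (hlap : ∀ x ∈ U, lapf g u x = 0) (A : StaticUnknown n) :
    principalOp g (staticUnknowns g u A) ∈ lowerOrderOn (staticUnknowns g u) U := by
  have hmetric := hgauge.principalOp_metricComp_mem_lowerOrderOn hU hg hu hu₀ hric
  have hpotential := principalOp_potential_mem_lowerOrderOn hu hlap
  match A with
  | .metric i j => exact hmetric i j
  | .inverse i j => exact principalOp_inverseComp_mem_lowerOrderOn hg hu hu₀ hmetric i j
  | .potential => exact hpotential
  | .potentialInv => exact principalOp_potentialInv_mem_lowerOrderOn hg hu hu₀ hpotential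

theorem exists_isQuasilinearSolution (hgauge : IsStaticHarmonicOn g u U) (hU : IsOpen U)
    (hg : IsSmoothMetric g) (hu : ContDiff ℝ ∞ u) (hu₀ : ∀ x, u x ≠ 0)
    (hric : ∀ x ∈ U, ∀ i j, ric g x i j = (u x)⁻¹ * hess g u x i j)
    (hlap : ∀ x ∈ U, lapf g u x = 0) :
    ∃ f, IsQuasilinearSolution (staticUnknowns g u) StaticUnknown.inverse f U := by
  choose f hf hfU using
    hgauge.principalOp_staticUnknowns_mem_lowerOrderOn hU hg hu hu₀ hric hlap
  have hsmooth := contDiff_staticUnknowns hg hu hu₀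
  refine ⟨f, hsmooth, hU, fun x _ => (hg.posDef x).inv, hf, fun A x hx => ?_⟩
  rw [← hfU A hx, trace_coeffMat_mul_hessMat]
  simp only [principalOp, Finset.sum_apply, pd_comm (hsmooth A)]
  rfl

end IsStaticHarmonicOn

end

/-- in static-harmonic coordinates, the static vacuum system is
quasilinear elliptic with second-order part `(1/2) ḡ^{rs} ∂²ḡ_{ij}/∂x_r∂x_s`
(the remainder depending only on `ḡ, ∂ḡ, ū, ∂ū`), and consequently `ḡ` and `ū`
are real-analytic in such coordinates on the interior. -/
theorem statement17 {n : ℕ} (g : Pt n → Fin n → Fin n → ℝ) (u : Pt n → ℝ)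
    (U : Set (Pt n)) (hU : IsOpen U)
    (hgsym : symT g) (hgpos : posdef g) (hgsm : smoothT g)
    (husm : ContDiff ℝ (⊤ : ℕ∞) u) (hupos : ∀ x, 0 < u x)
    -- static vacuum: `Ric = ū⁻¹ ∇²ū` and `Δū = 0` on `U`
    (hsv1 : ∀ x ∈ U, ∀ i j, ric g x i j = (u x)⁻¹ * hess g u x i j)
    (hsv2 : ∀ x ∈ U, lapf g u x = 0)
    -- the coordinates are static-harmonic: `-Γ^k + ū⁻¹ ḡ^{ik} ∂_i ū = 0` on `U`
    (hsh : ∀ x ∈ U, ∀ k : Fin n,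
      -(∑ i, ∑ j, ginv g x i j * chr g x k i j)
        + (u x)⁻¹ * ∑ i, ginv g x i k * pd i u x = 0) :
    (∃ F : (Fin n → Fin n → ℝ) → (Fin n → Fin n → Fin n → ℝ) → ℝ →
        (Fin n → ℝ) → Fin n → Fin n → ℝ,
      ∀ x ∈ U, ∀ i j : Fin n,
        -(ric g x i j) + (u x)⁻¹ * hess g u x i j
          = (1/2) * (∑ r, ∑ s, ginv g x r s * pd2 r s (fun y => g y i j) x)
            + F (g x) (fun k a b => pd k (fun y => g y a b) x) (u x)
                (fun k => pd k u x) i j) ∧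
    (∀ i j, AnalyticOnNhd ℝ (fun x => g x i j) U) ∧
    AnalyticOnNhd ℝ u U := by
  have hg : IsSmoothMetric g := ⟨hgsym, hgpos, hgsm⟩
  have hu₀ : ∀ x, u x ≠ 0 := fun x => (hupos x).ne'
  have hgauge : IsStaticHarmonicOn g u U := hsh
  obtain ⟨f, hf⟩ := hgauge.exists_isQuasilinearSolution hU hg husm hu₀ hsv1 hsv2
  exact ⟨hgauge.exists_neg_ric_add_hess_eq hU hg husm hu₀,
    fun i j => hf.analyticOnNhd (.metric i j), hf.analyticOnNhd .potential⟩
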